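/- arXiv:0812.0672 — 3 statements merged into one kernel-verified Lean document; each statement's English description precedes it below -/
import Mathlib

section
/- Every proper, geodesic Ptolemy metric space is strictly distance convex: for every point p ∈ X and every geodesic c : I → X satisfying |c(s)c(t)| > | |p c(s)| − |p c(t)| | for all s ≠ t in I, the function t ↦ |p c(t)| is strictly convex. -/
/-!
The distance to a point is convex along geodesics by the Ptolemy inequality applied to `p` and
three points of the geodesic, so only strictness at midpoints has to be shown.

The main step is `exists_midpoint_dist_lt`: if `|px|` and `|py|` differ by less than `|xy|`, then
some midpoint `w` of `x, y` satisfies `|pw| < (|px| + |py|) / 2`. Move a point `z` from `x` towards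
`p`, with `r = |xz|` tending to `0`, and choose a midpoint `w'` of `y, z`. By properness `w'`
accumulates at a midpoint `w` of `x, y`. Since `|ww'|` tends to `0`, the Ptolemy inequality for
`w, w', x, z` is a first variation formula: `|wz| ≤ |xy|/2 + Δ + o(r)`, where `Δ = |yz| - |xy|`.
If `|pw|` were equal to `(|px| + |py|) / 2`, inserting this in the Ptolemy inequality for
`z, p, w, y` would give `r |xy| ≤ (|py| - |px|) Δ + o(r)`, whereas `|Δ| ≤ r` and
`||py| - |px|| < |xy|`.

The point `w` is not prescribed, so uniqueness of midpoints is needed, and it follows from the same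
step: if `x ≠ y` are both midpoints of `p, q`, then every midpoint of `x, y` is again at distance
`|pq| / 2` from `p` and from `q`, which contradicts the strict inequality.
-/

/-- A metric space is Ptolemy if `|xy|·|uv| ≤ |xu|·|yv| + |xv|·|yu|` for all points. -/
def IsPtolemy (X : Type*) [MetricSpace X] : Prop :=
  ∀ x y u v : X, dist x y * dist u v ≤ dist x u * dist y v + dist x v * dist y u

/-- `c` is a geodesic on `I` (parameterized proportionally to arclength with speed `l ≥ 0`). -/
def IsGeodesicOn {X : Type*} [MetricSpace X] (c : ℝ → X) (I : Set ℝ) : Prop :=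
  ∃ l : ℝ, 0 ≤ l ∧ ∀ s ∈ I, ∀ t ∈ I, dist (c s) (c t) = l * |s - t|

/-- A metric space is geodesic if every pair of points is joined by a geodesic. -/
def IsGeodesicSpace (X : Type*) [MetricSpace X] : Prop :=
  ∀ x y : X, ∃ c : ℝ → X, c 0 = x ∧ c 1 = y ∧ IsGeodesicOn c (Set.Icc 0 1)

/-- `m` is a metric midpoint of `x` and `y`. -/
def IsMetricMidpoint {X : Type*} [MetricSpace X] (m x y : X) : Prop :=
  dist x m = dist x y / 2 ∧ dist y m = dist x y / 2

theorem IsGeodesicSpace.exists_midpoint {X : Type*} [MetricSpace X] (hgeo : IsGeodesicSpace X)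
    (x y : X) : ∃ m, IsMetricMidpoint m x y := by
  obtain ⟨c, h0, h1, l, -, hl⟩ := hgeo x y
  have e : dist x y = l := by
    have := hl 0 (by norm_num) 1 (by norm_num)
    rw [h0, h1] at this
    norm_num at this
    exact this
  refine ⟨c (1 / 2), ?_, ?_⟩
  · have := hl 0 (by norm_num) (1 / 2) (by norm_num)
    rw [h0] at this
    rw [this, e]; norm_num [abs_of_pos]; ring
  · have := hl 1 (by norm_num) (1 / 2) (by norm_num)
    rw [h1] at this
    rw [this, e]; norm_num [abs_of_pos]; ring

/-- Distances to points are midpoint convex in a Ptolemy space. -/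
theorem IsPtolemy.dist_midpoint_le {X : Type*} [MetricSpace X] (hpt : IsPtolemy X)
    {m x y : X} (hm : IsMetricMidpoint m x y) (p : X) :
    dist p m ≤ (dist p x + dist p y) / 2 := by
  obtain ⟨h1, h2⟩ := hm
  rcases (dist_nonneg (x := x) (y := y)).eq_or_lt with h | h
  · have hxy : x = y := dist_eq_zero.1 h.symm
    have hxm : x = m := dist_eq_zero.1 (by rw [h1, ← h]; simp)
    subst hxy; subst hxm
    linarith
  · have := hpt p m x y
    rw [dist_comm m y, dist_comm m x, h1, h2] at this
    nlinarith

/-- The quantitative form of the first variation argument: `w` is a midpoint of `x, y` at which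
the distance to `p` is the mean value, `z` is a point between `x` and `p`, and `w'` is a midpoint
of `y, z`. -/
theorem IsPtolemy.variation_estimate {X : Type*} [MetricSpace X] (hpt : IsPtolemy X)
    {p x y z w w' : X} (hw : IsMetricMidpoint w x y) (hw' : IsMetricMidpoint w' y z)
    (hpw : dist p w = (dist p x + dist p y) / 2)
    (hz : dist z p = dist p x - dist x z) (hr : 0 < dist x z) (hrT : dist x z < dist x y) :
    dist x y ^ 2 - |dist p y - dist p x| * dist x y ≤
      4 * dist p y * dist w w' + dist x z * (dist p x + dist p y + dist x y) := by
  obtain ⟨hw1, hw2⟩ := hw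
  obtain ⟨hw1', hw2'⟩ := hw'
  have q1 := hpt z y p w
  have q2 := hpt w z w' x
  rw [hpw, hw2, hz, dist_comm z y, dist_comm y p] at q1
  rw [dist_comm w x, hw1, dist_comm z x, hw2'] at q2
  have t1 := dist_triangle x z y
  have t2 := dist_triangle y x z
  have t3 := dist_triangle x w' y
  rw [dist_comm w' y, hw1', dist_comm x w'] at t3
  rw [dist_comm z y] at t1
  rw [dist_comm y x] at t2
  rw [dist_comm z w] at q1
  set T := dist x y
  set R := dist p x
  set P := dist p y
  set r := dist x z
  set G := dist y z
  set ε := dist w w'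
  have hP : 0 ≤ P := dist_nonneg
  have hR : 0 ≤ R := dist_nonneg
  have hV : 0 ≤ dist w z := dist_nonneg
  obtain ⟨D, hD⟩ : ∃ D, G = T + D := ⟨G - T, by ring⟩
  rw [hD] at q1 q2 t1 t2 t3
  have hD1 : D ≤ r := by linarith
  have hD2 : -r ≤ D := by linarith
  have hTD : 0 < T - D := by linarith
  -- the first variation formula
  have k1 : dist w z * ((T - D) / 2) ≤ ε * r + T * (T + D) / 4 := by
    have : dist w z * ((T - D) / 2) ≤ dist w z * dist w' x :=
      mul_le_mul_of_nonneg_left (by linarith) hV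
    nlinarith
  have k2 := mul_le_mul_of_nonneg_left q1 hTD.le
  have k3 := mul_le_mul_of_nonneg_left k1 hP
  have k4 : r * T ^ 2 ≤ 4 * P * ε * r + (P - R) * D * T + D ^ 2 * (R + P) + r * T * D := by
    nlinarith
  have hT : 0 < T := hr.trans hrT
  have a0 : |D| ≤ r := abs_le.2 ⟨hD2, hD1⟩
  have a1 : (P - R) * D ≤ |P - R| * r :=
    (le_abs_self _).trans (by rw [abs_mul]; gcongr)
  have a2 : D ^ 2 ≤ r ^ 2 := sq_le_sq' hD2 hD1
  have a3 := mul_le_mul_of_nonneg_right a1 hT.le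
  have a4 := mul_le_mul_of_nonneg_right a2 (add_nonneg hR hP)
  have a5 : r * T * D ≤ r * T * r := mul_le_mul_of_nonneg_left hD1 (by positivity)
  refine le_of_mul_le_mul_left (a := r) ?_ hr
  nlinarith

theorem exists_midpoint_dist_lt {X : Type*} [MetricSpace X] [ProperSpace X]
    (hgeo : IsGeodesicSpace X) (hpt : IsPtolemy X) {p x y : X}
    (h : |dist p y - dist p x| < dist x y) :
    ∃ w, IsMetricMidpoint w x y ∧ dist p w < (dist p x + dist p y) / 2 := by
  by_contra! hcon
  have heq : ∀ w, IsMetricMidpoint w x y → dist p w = (dist p x + dist p y) / 2 :=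
    fun w hw => le_antisymm (hpt.dist_midpoint_le hw p) (hcon w hw)
  have hT : 0 < dist x y := (abs_nonneg _).trans_lt h
  have hR : 0 < dist p x := by
    rcases (dist_nonneg (x := p) (y := x)).eq_or_lt with h0 | h0
    · have : p = x := dist_eq_zero.1 h0.symm
      subst this
      simp at h
    · exact h0
  obtain ⟨c, h0, h1, l, -, hl⟩ := hgeo x p
  have hlR : l = dist p x := by
    have := hl 0 (by norm_num) 1 (by norm_num)
    rw [h0, h1, dist_comm] at this
    norm_num at this
    exact this.symm
  have hu : ∀ n : ℕ, (0 : ℝ) < 1 / ((n : ℝ) + 1) ∧ 1 / ((n : ℝ) + 1) ≤ 1 := fun n =>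
    ⟨Nat.one_div_pos_of_nat, by
      rw [div_le_one (by positivity)]
      have : (0 : ℝ) ≤ n := n.cast_nonneg
      linarith⟩
  let z : ℕ → X := fun n => c (1 / ((n : ℝ) + 1))
  have hxz : ∀ n, dist x (z n) = dist p x * (1 / ((n : ℝ) + 1)) := by
    intro n
    have := hl 0 (by norm_num) (1 / ((n : ℝ) + 1)) ⟨(hu n).1.le, (hu n).2⟩
    rw [h0, zero_sub, abs_neg, abs_of_pos (hu n).1, hlR] at this
    exact this
  have hzp : ∀ n, dist (z n) p = dist p x - dist x (z n) := by
    intro n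
    have := hl (1 / ((n : ℝ) + 1)) ⟨(hu n).1.le, (hu n).2⟩ 1 (by norm_num)
    rw [h1, abs_sub_comm, abs_of_nonneg (by linarith [(hu n).2]), hlR] at this
    rw [hxz]
    exact this.trans (by ring)
  have hz0 : Filter.Tendsto (fun n => dist x (z n)) Filter.atTop (nhds 0) := by
    simp only [hxz]
    simpa using (tendsto_one_div_add_atTop_nhds_zero_nat (𝕜 := ℝ)).const_mul (dist p x)
  have hzx : Filter.Tendsto z Filter.atTop (nhds x) := by
    rw [tendsto_iff_dist_tendsto_zero]
    simpa only [dist_comm] using hz0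
  choose w' hw' using fun n => hgeo.exists_midpoint y (z n)
  have hmem : ∀ n, w' n ∈ Metric.closedBall y (dist x y + dist p x) := by
    intro n
    rw [Metric.mem_closedBall, dist_comm, (hw' n).1]
    have t := dist_triangle y x (z n)
    have : dist x (z n) ≤ dist p x := by
      rw [hxz]; exact mul_le_of_le_one_right hR.le (hu n).2
    rw [dist_comm y x] at t
    linarith [dist_nonneg (x := y) (y := z n)]
  obtain ⟨w, -, φ, hφ, hlim⟩ := (isCompact_closedBall y _).tendsto_subseq hmem
  have hzφ : Filter.Tendsto (fun n => z (φ n)) Filter.atTop (nhds x) :=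
    hzx.comp hφ.tendsto_atTop
  have hlim' : Filter.Tendsto (fun n => w' (φ n)) Filter.atTop (nhds w) := hlim
  have hw : IsMetricMidpoint w x y := by
    have e := (tendsto_const_nhds (x := y)).dist hzφ
    constructor
    · refine tendsto_nhds_unique (hzφ.dist hlim') ?_
      simp only [(hw' _).2]
      rw [dist_comm x y]
      exact e.div_const 2
    · refine tendsto_nhds_unique ((tendsto_const_nhds (x := y)).dist hlim') ?_
      simp only [(hw' _).1]
      rw [dist_comm x y]
      exact e.div_const 2
  have hr : Filter.Tendsto (fun n => dist x (z (φ n))) Filter.atTop (nhds 0) :=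
    hz0.comp hφ.tendsto_atTop
  have hε : Filter.Tendsto (fun n => dist w (w' (φ n))) Filter.atTop (nhds 0) := by
    simpa using (tendsto_const_nhds (x := w)).dist hlim'
  have hsum : Filter.Tendsto (fun n => 4 * dist p y * dist w (w' (φ n)) +
      dist x (z (φ n)) * (dist p x + dist p y + dist x y)) Filter.atTop (nhds 0) := by
    simpa using (hε.const_mul (4 * dist p y)).add
      (hr.mul_const (dist p x + dist p y + dist x y))
  have hgap : 0 < dist x y ^ 2 - |dist p y - dist p x| * dist x y := by nlinarith
  obtain ⟨n, hn1, hn2⟩ :=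
    ((hsum.eventually_lt_const hgap).and (hr.eventually_lt_const hT)).exists
  have hpos : 0 < dist x (z (φ n)) := by
    rw [hxz]; exact mul_pos hR (hu _).1
  exact absurd (hpt.variation_estimate hw (hw' _) (heq w hw) (hzp _) hpos hn2) (not_le.2 hn1)

theorem metricMidpoint_unique {X : Type*} [MetricSpace X] [ProperSpace X]
    (hgeo : IsGeodesicSpace X) (hpt : IsPtolemy X) {p q x y : X}
    (hx : IsMetricMidpoint x p q) (hy : IsMetricMidpoint y p q) : x = y := by
  by_contra hne
  obtain ⟨w, hw, hlt⟩ := exists_midpoint_dist_lt hgeo hpt (p := p) (x := x) (y := y)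
    (by rw [hx.1, hy.1]; simpa using hne)
  have hq := hpt.dist_midpoint_le hw q
  have t := dist_triangle p w q
  rw [hx.1, hy.1] at hlt
  rw [hx.2, hy.2] at hq
  rw [dist_comm w q] at t
  linarith

/-- **Theorem 1.5.** A proper, geodesic Ptolemy metric space is strictly distance convex:
for every `p` and every geodesic `c : I → X` with
`| |p c(s)| − |p c(t)| | < |c(s) c(t)|` for all `s ≠ t` in `I`, the function
`t ↦ |p c(t)|` is strictly convex on `I`. -/
theorem proper_geodesic_ptolemy_strictly_distance_convex
    {X : Type*} [MetricSpace X] [ProperSpace X]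
    (hgeo : IsGeodesicSpace X) (hpt : IsPtolemy X)
    (p : X) (c : ℝ → X) (I : Set ℝ) (hI : Convex ℝ I)
    (hc : IsGeodesicOn c I)
    (hstrict : ∀ s ∈ I, ∀ t ∈ I, s ≠ t →
      |dist p (c s) - dist p (c t)| < dist (c s) (c t)) :
    StrictConvexOn ℝ I (fun t => dist p (c t)) := by
  obtain ⟨l, hl, hd⟩ := hc
  have hconv : ConvexOn ℝ I (fun t => dist p (c t)) := by
    refine LinearOrder.convexOn_of_lt hI ?_
    intro s hs t ht hst α β hα hβ hαβ
    have hu : α • s + β • t ∈ I := hI hs ht hα.le hβ.le hαβ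
    have hα' : α = 1 - β := by linarith
    have hpos : 0 < dist (c s) (c t) := (abs_nonneg _).trans_lt (hstrict s hs t ht hst.ne)
    have e1 : dist (c (α • s + β • t)) (c s) = β * dist (c s) (c t) := by
      rw [hd _ hu _ hs, hd _ hs _ ht, abs_sub_comm s t, abs_of_pos (sub_pos.2 hst)]
      have : α • s + β • t - s = β * (t - s) := by simp only [smul_eq_mul, hα']; ring
      rw [this, abs_of_pos (mul_pos hβ (sub_pos.2 hst))]; ring
    have e2 : dist (c (α • s + β • t)) (c t) = α * dist (c s) (c t) := by
      rw [hd _ hu _ ht, hd _ hs _ ht, abs_sub_comm s t, abs_of_pos (sub_pos.2 hst)]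
      have : α • s + β • t - t = -(α * (t - s)) := by simp only [smul_eq_mul, hα']; ring
      rw [this, abs_neg, abs_of_pos (mul_pos hα (sub_pos.2 hst))]; ring
    have h := hpt p (c (α • s + β • t)) (c s) (c t)
    rw [e1, e2] at h
    refine le_of_mul_le_mul_right ?_ hpos
    simp only [smul_eq_mul] at h ⊢
    linarith
  have hmid : ∀ s ∈ I, ∀ t ∈ I, s ≠ t →
      dist p (c ((s + t) / 2)) < (dist p (c s) + dist p (c t)) / 2 := by
    intro s hs t ht hst
    have hu : (s + t) / 2 ∈ I := by
      have := hI hs ht (a := 1 / 2) (b := 1 / 2) (by norm_num) (by norm_num) (by norm_num)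
      convert this using 1
      simp only [smul_eq_mul]; ring
    have hm : IsMetricMidpoint (c ((s + t) / 2)) (c s) (c t) := by
      constructor
      · rw [hd _ hs _ hu, hd _ hs _ ht, show s - (s + t) / 2 = (s - t) / 2 by ring, abs_div]
        norm_num; ring
      · rw [hd _ ht _ hu, hd _ hs _ ht, show t - (s + t) / 2 = -((s - t) / 2) by ring, abs_neg,
          abs_div]
        norm_num; ring
    obtain ⟨w, hw, hlt⟩ := exists_midpoint_dist_lt hgeo hpt (p := p) (x := c s) (y := c t)
      (by rw [abs_sub_comm]; exact hstrict s hs t ht hst)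
    rwa [metricMidpoint_unique hgeo hpt hm hw]
  refine ⟨hI, ?_⟩
  intro s hs t ht hst α β hα hβ hαβ
  have hm := hmid s hs t ht hst
  have hu : (s + t) / 2 ∈ I := by
    have := hI hs ht (a := 1 / 2) (b := 1 / 2) (by norm_num) (by norm_num) (by norm_num)
    convert this using 1
    simp only [smul_eq_mul]; ring
  have hα' : α = 1 - β := by linarith
  -- the point lies in one half of the segment, so compare with the chord over that half
  rcases le_total β (1 / 2) with hb | hb
  · have h := hconv.2 hs hu (show 0 ≤ 1 - 2 * β by linarith)
      (show 0 ≤ 2 * β by linarith) (by ring)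
    have e : (1 - 2 * β) • s + (2 * β) • ((s + t) / 2) = α • s + β • t := by
      simp only [smul_eq_mul, hα']; ring
    rw [e] at h
    simp only [smul_eq_mul] at h ⊢
    rw [hα'] at h ⊢
    nlinarith
  · have h := hconv.2 hu ht (show 0 ≤ 2 * α by linarith)
      (show 0 ≤ 1 - 2 * α by linarith) (by ring)
    have e : (2 * α) • ((s + t) / 2) + (1 - 2 * α) • t = α • s + β • t := by
      simp only [smul_eq_mul, hα']; ring
    rw [e] at h
    simp only [smul_eq_mul] at h ⊢
    have hβ' : β = 1 - α := by linarith
    rw [hβ'] at h ⊢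
    nlinarith
end

section
/- Every proper, geodesic Ptolemy metric space is contractible; indeed, for any basepoint o ∈ X the map ρ : X × [0,1] → X, ρ(x,t) = c_{ox}(t), where c_{ox} : [0,1] → X is the unique geodesic from o to x, is a contraction of X to the point o. -/
open Filter Topology

/-- Distance functions are midpoint convex in a Ptolemy space. -/
lemma IsPtolemy.dist_midpoint_le_s11 {X : Type*} [MetricSpace X] (hpt : IsPtolemy X) {p q m y : X}
    {c : ℝ} (hpm : dist p m = dist p q / 2) (hqm : dist q m = dist p q / 2)
    (hp : dist p y ≤ c) (hq : dist q y ≤ c) : dist m y ≤ c := by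
  rcases eq_or_lt_of_le (dist_nonneg (x := p) (y := q)) with h | h
  · rw [← h, zero_div, dist_eq_zero] at hpm
    rwa [← hpm]
  · have := hpt p q m y
    rw [hpm, hqm] at this
    nlinarith

/-- The quantitative core: `m`, `m'` are midpoints of `p, q` and of `p', q'`, where `p', q'` lie
at distance `η` from `p, q`, and `m'` is farther from `x` than `p, q` by at least `η`. -/
lemma IsPtolemy.sq_dist_le {X : Type*} [MetricSpace X] (hpt : IsPtolemy X)
    {x p q m p' q' m' : X} {S η : ℝ} (hη : 0 < η)
    (hxp : dist x p = S) (hxq : dist x q = S) (hp : dist p p' = η) (hq : dist q q' = η)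
    (hpm : dist p m = dist p q / 2) (hqm : dist q m = dist p q / 2)
    (hpm' : dist p' m' = dist p' q' / 2) (hqm' : dist q' m' = dist p' q' / 2)
    (hxm : S + η ≤ dist x m') :
    dist p q ^ 2 ≤ 4 * S * (dist m m' + η) := by
  have hS : 0 ≤ S := hxp ▸ dist_nonneg
  have h1 := hpt p m' p' m
  have h2 := hpt q m' q' m
  have h3 := hpt x m' p q
  have h4 := dist_triangle p' m q'
  have e1 := dist_triangle p p' m'
  have e2 := dist_triangle p' p m'
  have e3 := dist_triangle q q' m'
  have e4 := dist_triangle q' q m'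
  have f1 := dist_triangle p' p m
  have f2 := dist_triangle p p' m
  have f3 := dist_triangle q' q m
  have f4 := dist_triangle q q' m
  simp only [dist_comm m' p, dist_comm m' q, dist_comm m' p', dist_comm m' q', dist_comm m' m,
    dist_comm p' p, dist_comm q' q, dist_comm m q'] at *
  rw [hpm, hpm', hp] at h1
  rw [hqm, hqm', hq] at h2
  rw [hxp, hxq] at h3
  rw [hp, hpm'] at e1 e2
  rw [hq, hqm'] at e3 e4
  rw [hp, hpm] at f1 f2
  rw [hq, hqm] at f3 f4
  set a := dist p q
  set b := dist p' q'
  set ζ := dist m m'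
  set A := dist p m'
  set B := dist p' m
  set A' := dist q m'
  set B' := dist q' m
  have ha : 0 ≤ a := dist_nonneg
  have hb : 0 ≤ b := dist_nonneg
  -- The deviations of the diagonals from `b / 2` and `a / 2` are at most `η`, so their
  -- products are of second order.
  have g1 : -η ^ 2 ≤ (A - b / 2) * (B - a / 2) := by
    have : |(A - b / 2) * (B - a / 2)| ≤ η * η := by
      rw [abs_mul]
      exact mul_le_mul (abs_le.2 ⟨by linarith, by linarith⟩)
        (abs_le.2 ⟨by linarith, by linarith⟩) (abs_nonneg _) hη.le
    nlinarith [(abs_le.1 this).1]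
  have g2 : -η ^ 2 ≤ (A' - b / 2) * (B' - a / 2) := by
    have : |(A' - b / 2) * (B' - a / 2)| ≤ η * η := by
      rw [abs_mul]
      exact mul_le_mul (abs_le.2 ⟨by linarith, by linarith⟩)
        (abs_le.2 ⟨by linarith, by linarith⟩) (abs_nonneg _) hη.le
    nlinarith [(abs_le.1 this).1]
  have k1 : a / 2 * (A + A' - b) + b / 2 * (B + B' - a) ≤ 2 * η * ζ + 2 * η ^ 2 := by
    nlinarith
  have k2 : b / 2 * (b - a) ≤ b / 2 * (B + B' - a) :=
    mul_le_mul_of_nonneg_left (by linarith) (by linarith)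
  have k3 : (S + η) * a ≤ S * (A + A') := by
    have := mul_le_mul_of_nonneg_right hxm ha
    linarith
  have k4 : S * (a / 2 * (A + A' - b) + b / 2 * (b - a)) ≤ S * (2 * η * ζ + 2 * η ^ 2) :=
    mul_le_mul_of_nonneg_left (by linarith) hS
  have k5 := mul_le_mul_of_nonneg_right k3 ha
  have k6 : η * a ^ 2 ≤ η * (4 * S * (ζ + η)) := by
    nlinarith [mul_nonneg hS (sq_nonneg (a - b))]
  exact le_of_mul_le_mul_left k6 hη

lemma IsGeodesicSpace.exists_midpoint_s11 {X : Type*} [MetricSpace X] (hgeo : IsGeodesicSpace X)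
    (p q : X) : ∃ m, dist p m = dist p q / 2 ∧ dist q m = dist p q / 2 := by
  obtain ⟨c, rfl, rfl, l, hl, h⟩ := hgeo p q
  have h0 : (0 : ℝ) ∈ Set.Icc (0 : ℝ) 1 := by norm_num
  have h1 : (1 : ℝ) ∈ Set.Icc (0 : ℝ) 1 := by norm_num
  have h2 : (1 / 2 : ℝ) ∈ Set.Icc (0 : ℝ) 1 := by norm_num
  refine ⟨c (1 / 2), ?_, ?_⟩
  · rw [h _ h0 _ h2, h _ h0 _ h1]; norm_num [abs_of_pos]; ring
  · rw [h _ h1 _ h2, h _ h0 _ h1]; norm_num [abs_of_pos]; ring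

/-- A point between `x` and `y` is determined by its distances to `x` and `y`. -/
lemma IsPtolemy.eq_of_dist_eq {X : Type*} [MetricSpace X] [ProperSpace X]
    (hpt : IsPtolemy X) (hgeo : IsGeodesicSpace X) {x y z w : X} {α β : ℝ}
    (hxy : dist x y = α + β) (hxz : dist x z = α) (hxw : dist x w = α)
    (hzy : dist z y = β) (hwy : dist w y = β) : z = w := by
  have hβ : 0 ≤ β := hzy ▸ dist_nonneg
  rcases hβ.eq_or_lt with rfl | hβ
  · rw [dist_eq_zero] at hzy hwy
    rw [hzy, hwy]
  -- Properties of a geodesic from a point `v` of the given distances to `y`.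
  have key : ∀ v : X, dist x v = α → dist v y = β → ∃ c : ℝ → X,
      (∀ r ∈ Set.Icc (0 : ℝ) 1, dist (c r) v = β * r ∧ dist (c r) y = β * (1 - r) ∧
        dist x (c r) = α + β * r) ∧
      ∀ s ∈ Set.Icc (0 : ℝ) 1, ∀ t ∈ Set.Icc (0 : ℝ) 1, s ≤ t →
        dist (c s) (c t) = β * (t - s) := by
    intro v hxv hvy
    obtain ⟨c, hc0, hc1, l, hl, h⟩ := hgeo v y
    have h0 : (0 : ℝ) ∈ Set.Icc (0 : ℝ) 1 := by norm_num
    have h1 : (1 : ℝ) ∈ Set.Icc (0 : ℝ) 1 := by norm_num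
    have hlβ : l = β := by
      have := h 0 h0 1 h1
      rw [hc0, hc1, hvy] at this
      simpa using this.symm
    subst hlβ
    refine ⟨c, fun r hr => ?_, fun s hs t ht hst => ?_⟩
    · have e1 := h r hr 0 h0
      have e2 := h r hr 1 h1
      rw [hc0, sub_zero, abs_of_nonneg hr.1] at e1
      rw [hc1, abs_sub_comm, abs_of_nonneg (by linarith [hr.2])] at e2
      have t1 := dist_triangle x v (c r)
      have t2 := dist_triangle x (c r) y
      rw [dist_comm v] at t1
      exact ⟨e1, e2, by linarith⟩
    · rw [h s hs t ht, abs_sub_comm, abs_of_nonneg (by linarith)]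
  obtain ⟨p, hp, hpp⟩ := key z hxz hzy
  obtain ⟨q, hq, hqq⟩ := key w hxw hwy
  choose m hpm hqm using fun r => hgeo.exists_midpoint_s11 (p r) (q r)
  have hmy : ∀ r ∈ Set.Icc (0 : ℝ) 1, dist (m r) y ≤ β * (1 - r) := fun r hr =>
    hpt.dist_midpoint_le_s11 (hpm r) (hqm r) (hp r hr).2.1.le (hq r hr).2.1.le
  have hxm : ∀ r ∈ Set.Icc (0 : ℝ) 1, α + β * r ≤ dist x (m r) := fun r hr => by
    have := dist_triangle x (m r) y
    linarith [hmy r hr]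
  have hest : ∀ s ∈ Set.Icc (0 : ℝ) 1, ∀ t ∈ Set.Icc (0 : ℝ) 1, s < t →
      dist (p s) (q s) ^ 2 ≤ 4 * (α + β * s) * (dist (m s) (m t) + β * (t - s)) := by
    intro s hs t ht hst
    refine hpt.sq_dist_le (mul_pos hβ (sub_pos.2 hst)) (hp s hs).2.2 (hq s hs).2.2
      (hpp s hs t ht hst.le) (hqq s hs t ht hst.le) (hpm s) (hqm s) (hpm t) (hqm t) ?_
    linarith [hxm t ht]
  -- Levels decreasing to that of `z` and `w`, along which midpoints converge.
  let r : ℕ → ℝ := fun n => 1 / ((n : ℝ) + 1)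
  have hr : ∀ n, r n ∈ Set.Icc (0 : ℝ) 1 := fun n =>
    ⟨by positivity, by
      rw [div_le_one (by positivity)]
      linarith [(Nat.cast_nonneg n : (0 : ℝ) ≤ n)]⟩
  have hr0 : Tendsto r atTop (𝓝 0) := tendsto_one_div_add_atTop_nhds_zero_nat
  obtain ⟨M, -, φ, hφ, hM⟩ := (isCompact_closedBall y β).tendsto_subseq
    (x := fun n => m (r n)) (fun n => by
      rw [Metric.mem_closedBall]
      nlinarith [hmy _ (hr n), (hr n).1])
  have hrφ : Tendsto (fun n => r (φ n)) atTop (𝓝 0) := hr0.comp hφ.tendsto_atTop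
  have hrφ1 : Tendsto (fun n => r (φ (n + 1))) atTop (𝓝 0) := hrφ.comp (tendsto_add_atTop_nat 1)
  have hM1 : Tendsto (fun n => m (r (φ (n + 1)))) atTop (𝓝 M) :=
    hM.comp (tendsto_add_atTop_nat 1)
  have hlim : ∀ (c : ℝ → X) (v : X), (∀ s ∈ Set.Icc (0 : ℝ) 1, dist (c s) v = β * s) →
      Tendsto (fun n => c (r (φ (n + 1)))) atTop (𝓝 v) := by
    intro c v hc
    rw [tendsto_iff_dist_tendsto_zero]
    simp_rw [hc _ (hr _)]
    simpa using hrφ1.const_mul β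
  have hL := ((hlim p z fun s hs => (hp s hs).1).dist (hlim q w fun s hs => (hq s hs).1)).pow 2
  have hR := ((hrφ1.const_mul β).const_add α |>.const_mul 4).mul
    ((hM1.dist hM).add ((hrφ.sub hrφ1).const_mul β))
  have hle := le_of_tendsto_of_tendsto' hL hR fun n => hest _ (hr _) _ (hr _)
    (one_div_lt_one_div_of_lt (by positivity) (by
      have : φ n < φ (n + 1) := hφ (Nat.lt_succ_self n)
      have : (φ n : ℝ) < φ (n + 1) := by exact_mod_cast this
      linarith))
  simp only [dist_self, sub_zero, mul_zero, add_zero] at hle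
  have : dist z w = 0 := by nlinarith [sq_nonneg (dist z w), dist_nonneg (x := z) (y := w)]
  exact dist_eq_zero.1 this

/-- A proper geodesic Ptolemy metric space is contractible; indeed for every basepoint `o`
the map `ρ(x,t) = c_{ox}(t)`, where `c_{ox}` is a (the unique) geodesic from `o` to `x`,
is a contraction of `X` to `o`. -/
theorem proper_geodesic_ptolemy_contractible
    {X : Type*} [MetricSpace X] [ProperSpace X] [Nonempty X]
    (hgeo : IsGeodesicSpace X) (hpt : IsPtolemy X) :
    ContractibleSpace X ∧
    ∀ o : X, ∃ ρ : X → ℝ → X,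
      Continuous (fun p : X × Set.Icc (0 : ℝ) 1 => ρ p.1 p.2) ∧
      ∀ x : X, ρ x 0 = o ∧ ρ x 1 = x ∧ IsGeodesicOn (ρ x) (Set.Icc 0 1) := by
  have main : ∀ o : X, ∃ ρ : X → ℝ → X,
      Continuous (fun p : X × Set.Icc (0 : ℝ) 1 => ρ p.1 p.2) ∧
      ∀ x : X, ρ x 0 = o ∧ ρ x 1 = x ∧ IsGeodesicOn (ρ x) (Set.Icc 0 1) := by
    intro o
    choose ρ h0 h1 hρ using hgeo o
    refine ⟨ρ, ?_, fun x => ⟨h0 x, h1 x, hρ x⟩⟩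
    have hd : ∀ p : X × Set.Icc (0 : ℝ) 1, dist o (ρ p.1 p.2) = p.2 * dist o p.1 ∧
        dist (ρ p.1 p.2) p.1 = (1 - p.2) * dist o p.1 := by
      rintro ⟨x, t, ht⟩
      obtain ⟨l, hl, h⟩ := hρ x
      have m0 : (0 : ℝ) ∈ Set.Icc (0 : ℝ) 1 := by norm_num
      have m1 : (1 : ℝ) ∈ Set.Icc (0 : ℝ) 1 := by norm_num
      have e := h 0 m0 1 m1
      have e0 := h 0 m0 t ht
      have e1 := h t ht 1 m1
      rw [h0, h1] at e
      rw [h0, zero_sub, abs_neg, abs_of_nonneg ht.1] at e0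
      rw [h1, abs_sub_comm, abs_of_nonneg (by linarith [ht.2])] at e1
      norm_num at e
      simp only
      rw [e0, e1, e]
      constructor <;> ring
    rw [continuous_iff_ultrafilter]
    intro p g hg
    -- The values of `ρ` near `p` stay in a fixed compact ball.
    have hfst : Tendsto (fun q : X × Set.Icc (0 : ℝ) 1 => q.1) g (𝓝 p.1) :=
      (continuous_fst.tendsto p).mono_left hg
    have hsnd : Tendsto (fun q : X × Set.Icc (0 : ℝ) 1 => (q.2 : ℝ)) g (𝓝 p.2) :=
      ((continuous_subtype_val.comp continuous_snd).tendsto p).mono_left hg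
    have hdist : Tendsto (fun q : X × Set.Icc (0 : ℝ) 1 => dist o q.1) g (𝓝 (dist o p.1)) :=
      tendsto_const_nhds.dist hfst
    have hball : ∀ᶠ q in (g : Filter (X × Set.Icc (0 : ℝ) 1)),
        ρ q.1 q.2 ∈ Metric.closedBall o (dist o p.1 + 1) := by
      filter_upwards [hdist.eventually_lt_const (lt_add_one _)] with q hq
      rw [Metric.mem_closedBall, dist_comm, (hd q).1]
      nlinarith [q.2.2.1, q.2.2.2, dist_nonneg (x := o) (y := q.1)]
    obtain ⟨z, -, hz⟩ := (isCompact_closedBall o (dist o p.1 + 1)).ultrafilter_le_nhds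
      (g.map fun q : X × Set.Icc (0 : ℝ) 1 => ρ q.1 q.2) (Filter.le_principal_iff.2 hball)
    have hz' : Tendsto (fun q : X × Set.Icc (0 : ℝ) 1 => ρ q.1 q.2) g (𝓝 z) := hz
    have z1 : dist o z = p.2 * dist o p.1 :=
      tendsto_nhds_unique ((tendsto_const_nhds.dist hz').congr fun q => (hd q).1)
        (hsnd.mul hdist)
    have z2 : dist z p.1 = (1 - p.2) * dist o p.1 :=
      tendsto_nhds_unique ((hz'.dist hfst).congr fun q => (hd q).2)
        ((hsnd.const_sub 1).mul hdist)
    have : z = ρ p.1 p.2 :=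
      hpt.eq_of_dist_eq hgeo (x := o) (y := p.1) (by ring) z1 (hd p).1 z2 (hd p).2
    rwa [this] at hz'
  refine ⟨?_, main⟩
  rw [contractible_iff_id_nullhomotopic]
  obtain ⟨o⟩ := ‹Nonempty X›
  obtain ⟨ρ, hc, hρ⟩ := main o
  refine ⟨o, ContinuousMap.Homotopic.symm ⟨?_⟩⟩
  exact
    { toFun := fun q => ρ q.2 q.1
      continuous_toFun := hc.comp continuous_swap
      map_zero_left := fun x => by simpa using (hρ x).1
      map_one_left := fun x => by simpa using (hρ x).2.1 }
end

section
/- Let X be a complete, geodesic Ptolemy metric space which is a topological manifold. Then every geodesic in X is extendable: for every geodesic segment c : I → X there exists a geodesic c̄ : ℝ → X whose restriction to I equals c. -/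
/-! ### Kuhn's lemma via the mod 2 cubical cup product -/

section Kuhn
variable {ι : Type*} [DecidableEq ι]

/-- The value on the unit cube with lowest vertex `x` and edge directions `I` of the mod 2
cubical cup product `δa₁ ∪ ⋯ ∪ δaₙ`, where `L = [a₁, …, aₙ]` is a list of functions on grid
vertices. It is defined recursively: the first factor is evaluated on the edge from `x` in a
direction `i ∈ I`, the others on the opposite face of the cube. It is only meaningful when `I` has
as many elements as `L`. -/
def cupForm : List ((ι → ℕ) → ZMod 2) → Finset ι → (ι → ℕ) → ZMod 2
  | [], _, _ => 1
  | a :: L, I, x =>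
    ∑ i ∈ I, (a (x + Pi.single i 1) + a x) * cupForm L (I.erase i) (x + Pi.single i 1)

theorem zmod_two_add_self (a : ZMod 2) : a + a = 0 := CharTwo.add_self_eq_zero a

/-- Summing a symmetric function over ordered pairs of distinct indices gives `0` mod 2. -/
theorem sum_offDiag_symm (I : Finset ι) (s : ι → ι → ZMod 2) (hs : ∀ i j, s i j = s j i) :
    ∑ i ∈ I, ∑ j ∈ I.erase i, s i j = 0 := by
  rw [Finset.sum_sigma']
  refine Finset.sum_involution (fun x _ => ⟨x.2, x.1⟩) ?_ ?_ ?_ ?_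
  · rintro ⟨i, j⟩ _
    simp only
    rw [hs i j]; exact zmod_two_add_self _
  · rintro ⟨i, j⟩ h _ h'
    simp only [Finset.mem_sigma, Finset.mem_erase, Sigma.mk.injEq] at h h'
    exact h.2.1 h'.1
  · rintro ⟨i, j⟩ h
    simp only [Finset.mem_sigma, Finset.mem_erase] at h ⊢
    exact ⟨h.2.2, h.2.1.symm, h.1⟩
  · rintro ⟨i, j⟩ _
    rfl

/-- The cochain `δa₁ ∪ ⋯ ∪ δaₙ` is closed: its sum over all facets of a cube vanishes. -/
theorem cupForm_closed (L : List ((ι → ℕ) → ZMod 2)) : ∀ (I : Finset ι) (x : ι → ℕ),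
    ∑ i ∈ I, (cupForm L (I.erase i) (x + Pi.single i 1) + cupForm L (I.erase i) x) = 0 := by
  induction L with
  | nil => intro I x; simp [cupForm, zmod_two_add_self]
  | cons a L ih =>
    intro I x
    have key : ∑ i ∈ I, (cupForm (a :: L) (I.erase i) (x + Pi.single i 1)
          + cupForm (a :: L) (I.erase i) x)
        = ∑ i ∈ I, ∑ j ∈ I.erase i,
            (a (x + Pi.single i 1 + Pi.single j 1) + a (x + Pi.single i 1)
              + a (x + Pi.single j 1) + a x)
              * cupForm L ((I.erase i).erase j) (x + Pi.single i 1 + Pi.single j 1)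
          + ∑ j ∈ I, ∑ i ∈ I.erase j, (a (x + Pi.single j 1) + a x) *
              (cupForm L ((I.erase j).erase i) (x + Pi.single j 1 + Pi.single i 1)
                + cupForm L ((I.erase j).erase i) (x + Pi.single j 1)) := by
      have swap : ∑ j ∈ I, ∑ i ∈ I.erase j, (a (x + Pi.single j 1) + a x) *
              (cupForm L ((I.erase j).erase i) (x + Pi.single j 1 + Pi.single i 1)
                + cupForm L ((I.erase j).erase i) (x + Pi.single j 1))
          = ∑ i ∈ I, ∑ j ∈ I.erase i, (a (x + Pi.single j 1) + a x) *
              (cupForm L ((I.erase j).erase i) (x + Pi.single j 1 + Pi.single i 1)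
                + cupForm L ((I.erase j).erase i) (x + Pi.single j 1)) := by
        refine Finset.sum_comm' ?_
        intro i j
        simp only [Finset.mem_erase]
        constructor
        · rintro ⟨h1, h2, h3⟩; exact ⟨⟨fun h => h2 h.symm, h1⟩, h3⟩
        · rintro ⟨⟨h1, h2⟩, h3⟩; exact ⟨h2, fun h => h1 h.symm, h3⟩
      rw [swap, ← Finset.sum_add_distrib]
      refine Finset.sum_congr rfl fun i _ => ?_
      simp only [cupForm]
      rw [← Finset.sum_add_distrib, ← Finset.sum_add_distrib]
      refine Finset.sum_congr rfl fun j _ => ?_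
      rw [Finset.erase_right_comm (a := j) (b := i), add_right_comm x (Pi.single j 1)]
      linear_combination (-1 : ZMod 2) * zmod_two_add_self ((a (x + Pi.single j 1) + a x) *
        cupForm L ((I.erase i).erase j) (x + Pi.single i 1 + Pi.single j 1))
    rw [key, sum_offDiag_symm, zero_add]
    · refine Finset.sum_eq_zero fun j _ => ?_
      rw [← Finset.mul_sum, ih, mul_zero]
    · intro i j
      rw [Finset.erase_right_comm, add_right_comm x (Pi.single j 1)]
      ring

/-- `δa ∪ ω = δ(a ∪ ω)` for the closed cochain `ω = cupForm L`. -/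
theorem cupForm_cons (a : (ι → ℕ) → ZMod 2) (L : List ((ι → ℕ) → ZMod 2)) (I : Finset ι)
    (x : ι → ℕ) :
    cupForm (a :: L) I x = ∑ i ∈ I,
      (a (x + Pi.single i 1) * cupForm L (I.erase i) (x + Pi.single i 1)
        + a x * cupForm L (I.erase i) x) := by
  have h := cupForm_closed L I x
  have h2 : ∑ i ∈ I, a x * (cupForm L (I.erase i) (x + Pi.single i 1)
      + cupForm L (I.erase i) x) = 0 := by rw [← Finset.mul_sum, h, mul_zero]
  rw [← add_zero (cupForm (a :: L) I x), ← h2]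
  simp only [cupForm]
  rw [← Finset.sum_add_distrib]
  refine Finset.sum_congr rfl fun i _ => ?_
  linear_combination zmod_two_add_self (a x * cupForm L (I.erase i) (x + Pi.single i 1))

/-- If one of the functions is constant on a hyperplane, the cup product vanishes on the cubes
contained in that hyperplane. -/
theorem cupForm_eq_zero {i : ι} {v : ℕ} {f : (ι → ℕ) → ZMod 2} {c : ZMod 2}
    (hf : ∀ x, x i = v → f x = c) (L : List ((ι → ℕ) → ZMod 2)) (hL : f ∈ L) :
    ∀ (I : Finset ι), i ∉ I → ∀ x : ι → ℕ, x i = v → cupForm L I x = 0 := by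
  induction L with
  | nil => simp at hL
  | cons a L ih =>
    intro I hI x hx
    simp only [cupForm]
    refine Finset.sum_eq_zero fun j hj => ?_
    have hij : i ≠ j := fun h => hI (h ▸ hj)
    have hx' : (x + Pi.single j 1 : ι → ℕ) i = v := by simp [hij, hx]
    rcases List.mem_cons.1 hL with rfl | h
    · rw [hf _ hx, hf _ hx', zmod_two_add_self, zero_mul]
    · rw [ih h _ (fun h' => hI (Finset.mem_of_mem_erase h')) _ hx', mul_zero]

/-- On a cube where the cup product does not vanish, none of the functions is constant on the
vertices. -/
theorem exists_of_cupForm_ne_zero (L : List ((ι → ℕ) → ZMod 2)) :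
    ∀ (I : Finset ι) (x : ι → ℕ), cupForm L I x ≠ 0 → ∀ f ∈ L, ∃ z z' : ι → ℕ,
      f z ≠ f z' ∧ (∀ k, x k ≤ z k ∧ z k ≤ x k + if k ∈ I then 1 else 0) ∧
      (∀ k, x k ≤ z' k ∧ z' k ≤ x k + if k ∈ I then 1 else 0) := by
  induction L with
  | nil => simp
  | cons a L ih =>
    intro I x h f hf
    simp only [cupForm] at h
    obtain ⟨i, hi, hne⟩ := Finset.exists_ne_zero_of_sum_ne_zero h
    have hstep : ∀ k, x k ≤ (x + Pi.single i 1 : ι → ℕ) k ∧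
        (x + Pi.single i 1 : ι → ℕ) k + (if k ∈ I.erase i then 1 else 0)
          ≤ x k + if k ∈ I then 1 else 0 := by
      intro k
      by_cases hk : k = i
      · subst hk; simp [hi]
      · simp [hk]
    rcases List.mem_cons.1 hf with rfl | h'
    · refine ⟨x + Pi.single i 1, x, ?_, fun k => ⟨(hstep k).1, le_trans (Nat.le_add_right _ _)
        (hstep k).2⟩, fun k => ⟨le_rfl, Nat.le_add_right _ _⟩⟩
      intro heq
      rw [heq, zmod_two_add_self, zero_mul] at hne
      exact hne rfl
    · obtain ⟨z, z', h1, h2, h3⟩ := ih _ _ (right_ne_zero_of_mul hne) f h'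
      exact ⟨z, z', h1, fun k => ⟨(hstep k).1.trans (h2 k).1, (h2 k).2.trans (hstep k).2⟩,
        fun k => ⟨(hstep k).1.trans (h3 k).1, (h3 k).2.trans (hstep k).2⟩⟩

variable [Fintype ι]

/-- The lowest vertices of the unit cubes with edge directions `I` that tile the face
`{x | x i = y i for i ∉ I}` of the cube `[0, N]^ι`. -/
def gridBox (N : ℕ) (I : Finset ι) (y : ι → ℕ) : Finset (ι → ℕ) :=
  Fintype.piFinset fun i => if i ∈ I then Finset.range N else {y i}

theorem sum_gridBox (N : ℕ) (I : Finset ι) (y : ι → ℕ) {i : ι} (hi : i ∈ I)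
    (g : (ι → ℕ) → ZMod 2) :
    ∑ x ∈ gridBox N I y, g x
      = ∑ t ∈ Finset.range N, ∑ x ∈ gridBox N (I.erase i) (Function.update y i t), g x := by
  rw [Finset.sum_sigma']
  refine Finset.sum_bij' (fun x _ => ⟨x i, x⟩) (fun x _ => x.2) ?_ ?_ ?_ ?_ ?_
  · intro x hx
    simp only [gridBox, Fintype.mem_piFinset, Finset.mem_sigma, Finset.mem_erase] at hx ⊢
    refine ⟨by simpa [hi] using hx i, fun k => ?_⟩
    by_cases hk : k = i
    · subst hk; simp
    · simpa [hk] using hx k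
  · rintro ⟨t, x⟩ hx
    simp only [gridBox, Fintype.mem_piFinset, Finset.mem_sigma, Finset.mem_erase] at hx ⊢
    intro k
    by_cases hk : k = i
    · subst hk
      have := hx.2 k
      simp at this
      simp [hi, this, Finset.mem_range.1 hx.1]
    · simpa [hk] using hx.2 k
  · intro x _; rfl
  · rintro ⟨t, x⟩ hx
    simp only [gridBox, Fintype.mem_piFinset, Finset.mem_sigma, Finset.mem_erase] at hx
    have := hx.2 i
    simp at this
    simp [this]
  · intro x _; rfl

theorem sum_gridBox_succ (N : ℕ) (I : Finset ι) (y : ι → ℕ) {i : ι} (hi : i ∉ I) (t : ℕ)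
    (g : (ι → ℕ) → ZMod 2) :
    ∑ x ∈ gridBox N I (Function.update y i t), g (x + Pi.single i 1)
      = ∑ x ∈ gridBox N I (Function.update y i (t + 1)), g x := by
  refine Finset.sum_bij' (fun x _ => x + Pi.single i 1) (fun x _ => x - Pi.single i 1)
    ?_ ?_ ?_ ?_ ?_
  · intro x hx
    simp only [gridBox, Fintype.mem_piFinset] at hx ⊢
    intro k
    have := hx k
    by_cases hk : k = i
    · subst hk
      simpa [hi] using this
    · simpa [hk] using this
  · intro x hx
    simp only [gridBox, Fintype.mem_piFinset] at hx ⊢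
    intro k
    have := hx k
    by_cases hk : k = i
    · subst hk
      simp [hi] at this
      simp [hi, this]
    · simpa [hk] using this
  · intro x _
    simp
  · intro x hx
    simp only [gridBox, Fintype.mem_piFinset] at hx
    funext k
    have := hx k
    by_cases hk : k = i
    · subst hk
      simp [hi] at this
      simp [this]
    · simp [hk]
  · intro x _; rfl

/-- Telescoping in the direction `i`: only the two opposite faces contribute. -/
theorem sum_gridBox_diff (N : ℕ) (I : Finset ι) (y : ι → ℕ) {i : ι} (hi : i ∈ I)
    (g : (ι → ℕ) → ZMod 2) :
    ∑ x ∈ gridBox N I y, (g (x + Pi.single i 1) + g x)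
      = ∑ x ∈ gridBox N (I.erase i) (Function.update y i N), g x
        + ∑ x ∈ gridBox N (I.erase i) (Function.update y i 0), g x := by
  rw [sum_gridBox N I y hi]
  simp only [Finset.sum_add_distrib, sum_gridBox_succ N _ y (Finset.notMem_erase i I)]
  have telescope : ∀ G : ℕ → ZMod 2, ∑ t ∈ Finset.range N, (G (t + 1) + G t) = G N + G 0 := by
    intro G
    induction N with
    | zero => simp [zmod_two_add_self]
    | succ n ih =>
      rw [Finset.sum_range_succ, ih]
      linear_combination zmod_two_add_self (G n)
  rw [← Finset.sum_add_distrib]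
  exact telescope fun t => ∑ x ∈ gridBox N (I.erase i) (Function.update y i t), g x

/-- If `a i` is `0` on the face `x i = 0` and `1` on the face `x i = N`, the cup product of the
`δ(a i)` sums to `1` over the grid cube. By `cupForm_cons` the sum is a boundary sum, in which only
the face `x i = N` of the first direction `i` survives, and that face is a cube of one dimension
less. -/
theorem sum_cupForm (N : ℕ) (a : ι → (ι → ℕ) → ZMod 2) (h0 : ∀ i x, x i = 0 → a i x = 0)
    (h1 : ∀ i x, x i = N → a i x = 1) (l : List ι) (hl : l.Nodup) : ∀ y : ι → ℕ,
    ∑ x ∈ gridBox N l.toFinset y, cupForm (l.map a) l.toFinset x = 1 := by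
  induction l with
  | nil =>
    intro y
    simp [gridBox, cupForm]
  | cons i l ih =>
    intro y
    rw [List.nodup_cons] at hl
    simp only [List.map_cons, cupForm_cons]
    rw [Finset.sum_comm]
    have hmem : i ∈ (i :: l).toFinset := by simp
    have herase : (i :: l).toFinset.erase i = l.toFinset := by
      rw [List.toFinset_cons, Finset.erase_insert]; simpa using hl.1
    have hbox : ∀ (I : Finset ι) (j : ι) (t : ℕ), j ∉ I →
        ∀ x ∈ gridBox N I (Function.update y j t), x j = t := by
      intro I j t hj x hx
      simp only [gridBox, Fintype.mem_piFinset] at hx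
      simpa [hj] using hx j
    rw [Finset.sum_eq_single_of_mem i hmem]
    · rw [sum_gridBox_diff N _ y hmem (fun x => a i x * cupForm (l.map a) _ x), herase]
      have hi : i ∉ l.toFinset := by simpa using hl.1
      rw [← ih hl.2 (Function.update y i N)]
      rw [Finset.sum_eq_zero (s := gridBox N l.toFinset (Function.update y i 0)), add_zero]
      · exact Finset.sum_congr rfl fun x hx => by rw [h1 i x (hbox _ _ _ hi x hx), one_mul]
      · intro x hx; rw [h0 i x (hbox _ _ _ hi x hx), zero_mul]
    · intro j hj hji
      have hjl : a j ∈ l.map a := by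
        refine List.mem_map_of_mem ?_
        simpa [hji] using hj
      rw [sum_gridBox_diff N _ y hj (fun x => a i x * cupForm (l.map a) _ x),
        Finset.sum_eq_zero, Finset.sum_eq_zero, add_zero]
      · intro x hx
        rw [cupForm_eq_zero (h0 j) _ hjl _ (Finset.notMem_erase _ _) x
          (hbox _ _ _ (Finset.notMem_erase _ _) x hx), mul_zero]
      · intro x hx
        rw [cupForm_eq_zero (h1 j) _ hjl _ (Finset.notMem_erase _ _) x
          (hbox _ _ _ (Finset.notMem_erase _ _) x hx), mul_zero]

/-- Kuhn's combinatorial lemma, a discrete form of the Poincaré–Miranda theorem: if the labels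
`a i` are `0` on the face `x i = 0` and `1` on the face `x i = N`, then on some unit cube every
label takes both values. -/
theorem kuhn_lemma (N : ℕ) (a : ι → (ι → ℕ) → ZMod 2) (h0 : ∀ i x, x i = 0 → a i x = 0)
    (h1 : ∀ i x, x i = N → a i x = 1) :
    ∃ x : ι → ℕ, ∀ i, ∃ z z' : ι → ℕ, a i z ≠ a i z' ∧
      (∀ k, x k ≤ z k ∧ z k ≤ x k + 1) ∧ (∀ k, x k ≤ z' k ∧ z' k ≤ x k + 1) := by
  have h := sum_cupForm N a h0 h1 Finset.univ.toList (Finset.nodup_toList _) 0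
  obtain ⟨x, _, hx⟩ := Finset.exists_ne_zero_of_sum_ne_zero (h.trans_ne one_ne_zero)
  refine ⟨x, fun i => ?_⟩
  obtain ⟨z, z', h1, h2, h3⟩ := exists_of_cupForm_ne_zero _ _ _ hx (a i)
    (List.mem_map_of_mem (by simp))
  exact ⟨z, z', h1, by simpa using h2, by simpa using h3⟩

end Kuhn

/-! ### Barycenters and grid refinement -/

section Metric
variable {X : Type*} [MetricSpace X]

theorem IsGeodesicSpace.exists_unit (hgeo : IsGeodesicSpace X) (x y : X) :
    ∃ c : ℝ → X, c 0 = x ∧ c 1 = y ∧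
      ∀ s ∈ Set.Icc (0 : ℝ) 1, ∀ t ∈ Set.Icc (0 : ℝ) 1, dist (c s) (c t) = dist x y * |s - t| := by
  obtain ⟨c, rfl, rfl, l, hl, h⟩ := hgeo x y
  refine ⟨c, rfl, rfl, fun s hs t ht => ?_⟩
  have := h 0 (by simp) 1 (by simp)
  rw [h s hs t ht, this]; simp

theorem IsGeodesicSpace.exists_between (hgeo : IsGeodesicSpace X) (x y : X) {t : ℝ}
    (h0 : 0 ≤ t) (h1 : t ≤ 1) :
    ∃ z, dist x z = t * dist x y ∧ dist z y = (1 - t) * dist x y := by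
  obtain ⟨c, hc0, hc1, h⟩ := hgeo.exists_unit x y
  refine ⟨c t, ?_, ?_⟩
  · have := h 0 (by simp) t ⟨h0, h1⟩
    rw [hc0] at this
    rw [this, zero_sub, abs_neg, abs_of_nonneg h0, mul_comm]
  · have := h t ⟨h0, h1⟩ 1 (by simp)
    rw [hc1] at this
    rw [this, abs_sub_comm, abs_of_nonneg (by linarith), mul_comm]

/-- Distance functions are convex along geodesics: this is Ptolemy's inequality for `p`, `z`, `x`,
`y` with `z` between `x` and `y`. -/
theorem IsPtolemy.dist_le_of_between (hpt : IsPtolemy X) {x y z : X} {t : ℝ}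
    (hx : dist x z = t * dist x y) (hy : dist z y = (1 - t) * dist x y) (p : X) :
    dist p z ≤ (1 - t) * dist p x + t * dist p y := by
  rcases eq_or_ne x y with rfl | hne
  · have : dist x z = 0 := by rw [hx]; simp
    rw [dist_eq_zero] at this
    subst this
    linarith
  · have hpos := dist_pos.2 hne
    have h := hpt p z x y
    rw [hy, dist_comm z x, hx] at h
    have : dist x y * dist p z ≤ dist x y * ((1 - t) * dist p x + t * dist p y) := by
      linarith
    exact le_of_mul_le_mul_left this hpos

/-- Every finite family has a point at which each distance function is at most its mean over the
family, obtained by adjoining the points one at a time along geodesics. -/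
theorem exists_barycenter (hgeo : IsGeodesicSpace X) (hpt : IsPtolemy X) {α : Type*}
    (s : Finset α) (hs : s.Nonempty) (z : α → X) :
    ∃ g : X, ∀ p, (s.card : ℝ) * dist p g ≤ ∑ a ∈ s, dist p (z a) := by
  classical
  induction hs using Finset.Nonempty.cons_induction with
  | singleton a => exact ⟨z a, by simp⟩
  | cons a s ha hs ih =>
    obtain ⟨g, hg⟩ := ih
    have hk : (0 : ℝ) < s.card := by exact_mod_cast hs.card_pos
    set k : ℝ := (s.card : ℝ) with hk_def
    obtain ⟨g', h1, h2⟩ := hgeo.exists_between g (z a) (t := 1 / (k + 1)) (by positivity)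
      (by rw [div_le_one (by positivity)]; linarith)
    refine ⟨g', fun p => ?_⟩
    have h := hpt.dist_le_of_between h1 h2 p
    rw [Finset.sum_cons, Finset.card_cons]
    push_cast
    rw [← hk_def]
    have h3 : (k + 1) * dist p g' ≤ (k + 1) * ((1 - 1 / (k + 1)) * dist p g
      + 1 / (k + 1) * dist p (z a)) := by gcongr
    have h4 : (k + 1) * ((1 - 1 / (k + 1)) * dist p g + 1 / (k + 1) * dist p (z a))
      = k * dist p g + dist p (z a) := by field_simp; ring
    linarith [hg p]

variable {ι : Type*} [Fintype ι]

/-- Passing from a grid map `f` to a grid map `g` on the grid of half the mesh, `g w` being a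
barycenter of the values of `f` at the corners of the cell of `w / 2`. Two neighbouring points `w`,
`w'` share a corner, so one of the `4 ^ card ι` pairs of corner values has distance `0`; hence the
jumps shrink by a definite factor. Moreover `g w` lies in each ball that contains the corner values. -/
theorem exists_refine_once (hgeo : IsGeodesicSpace X) (hpt : IsPtolemy X) {r : ℝ}
    (f : (ι → ℕ) → X) (hf : ∀ v v' : ι → ℕ, (∀ i, v i ≤ v' i + 1 ∧ v' i ≤ v i + 1) →
      dist (f v) (f v') ≤ r) :
    ∃ g : (ι → ℕ) → X,
      (∀ w w' : ι → ℕ, (∀ i, w i ≤ w' i + 1 ∧ w' i ≤ w i + 1) →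
        dist (g w) (g w') ≤ (1 - 1 / (4 : ℝ) ^ Fintype.card ι) * r) ∧
      ∀ (w : ι → ℕ) (p : X) (ρ : ℝ),
        (∀ v : ι → ℕ, (∀ i, v i * 2 < w i + 2 ∧ w i < v i * 2 + 2) → dist p (f v) ≤ ρ) →
        dist p (g w) ≤ ρ := by
  classical
  -- In each coordinate the values `e i = 0, 1` give the rounding of `w i / 2` down and up.
  let corner : (ι → ℕ) → (ι → Fin 2) → ι → ℕ := fun w e i => (w i + (e i : ℕ)) / 2
  have hne : (Finset.univ : Finset (ι → Fin 2)).Nonempty := Finset.univ_nonempty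
  choose g hg using fun w : ι → ℕ =>
    exists_barycenter hgeo hpt (Finset.univ : Finset (ι → Fin 2)) hne (fun e => f (corner w e))
  have hcard : ((Finset.univ : Finset (ι → Fin 2)).card : ℝ) = 2 ^ Fintype.card ι := by
    simp
  simp only [hcard] at hg
  set M : ℝ := 2 ^ Fintype.card ι with hM
  have hMpos : 0 < M := by positivity
  refine ⟨g, fun w w' hww => ?_, fun w p ρ h => ?_⟩
  · have hadj : ∀ e e' : ι → Fin 2, dist (f (corner w e)) (f (corner w' e')) ≤ r := by
      intro e e'
      refine hf _ _ fun i => ?_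
      have := hww i
      have := (e i).isLt
      have := (e' i).isLt
      simp only [corner]
      omega
    have h1 : M * (M * dist (g w) (g w'))
        ≤ ∑ e' : ι → Fin 2, ∑ e : ι → Fin 2, dist (f (corner w e)) (f (corner w' e')) := by
      calc M * (M * dist (g w) (g w'))
          ≤ M * ∑ e' : ι → Fin 2, dist (g w) (f (corner w' e')) := by gcongr; exact hg w' _
        _ = ∑ e' : ι → Fin 2, M * dist (f (corner w' e')) (g w) := by
            rw [Finset.mul_sum]; simp only [dist_comm]
        _ ≤ _ := by
            refine Finset.sum_le_sum fun e' _ => (hg w _).trans_eq ?_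
            simp only [dist_comm]
    -- The common corner: round up exactly where the other point is larger.
    let e₀ : ι → Fin 2 := fun i => if w i < w' i then 1 else 0
    let e₁ : ι → Fin 2 := fun i => if w' i < w i then 1 else 0
    have heq : corner w e₀ = corner w' e₁ := by
      funext i
      have := hww i
      simp only [corner, e₀, e₁]
      split_ifs <;> simp <;> omega
    have h2 : ∑ e' : ι → Fin 2, ∑ e : ι → Fin 2, dist (f (corner w e)) (f (corner w' e'))
        ≤ M * M * r - r := by
      have hmem : (e₁, e₀) ∈ (Finset.univ : Finset (ι → Fin 2)) ×ˢ
          (Finset.univ : Finset (ι → Fin 2)) := by simp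
      rw [← Finset.sum_product',
        ← Finset.add_sum_erase _ _ hmem]
      simp only [heq, dist_self, zero_add]
      refine (Finset.sum_le_card_nsmul _ _ r fun x _ => hadj _ _).trans_eq ?_
      rw [Finset.card_erase_of_mem hmem, nsmul_eq_mul,
        Nat.cast_sub (Finset.card_pos.2 ⟨_, hmem⟩), Finset.card_product]
      push_cast
      rw [hcard]
      ring
    have h4 : (4 : ℝ) ^ Fintype.card ι = M * M := by
      rw [hM, ← mul_pow]; norm_num
    rw [h4]
    have h3 : M * M * dist (g w) (g w') ≤ M * M * ((1 - 1 / (M * M)) * r) := by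
      have : M * M * ((1 - 1 / (M * M)) * r) = M * M * r - r := by field_simp
      linarith
    exact le_of_mul_le_mul_left h3 (by positivity)
  · have h1 : M * dist p (g w) ≤ M * ρ := by
      refine (hg w p).trans ?_
      refine (Finset.sum_le_card_nsmul _ _ ρ fun e _ => h _ fun i => ?_).trans_eq ?_
      · have := (e i).isLt
        simp only [corner]
        omega
      · rw [nsmul_eq_mul, hcard]
    exact le_of_mul_le_mul_left h1 hMpos

/-- The `k`-fold iteration of `exists_refine_once`: the jumps become arbitrarily small, while `g w`
stays in each ball containing the values of `f` at the points of the original grid at distance less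
than one mesh from `w / 2 ^ k`. -/
theorem exists_refine (hgeo : IsGeodesicSpace X) (hpt : IsPtolemy X) {r : ℝ}
    (f : (ι → ℕ) → X) (hf : ∀ v v' : ι → ℕ, (∀ i, v i ≤ v' i + 1 ∧ v' i ≤ v i + 1) →
      dist (f v) (f v') ≤ r) (k : ℕ) :
    ∃ g : (ι → ℕ) → X,
      (∀ w w' : ι → ℕ, (∀ i, w i ≤ w' i + 1 ∧ w' i ≤ w i + 1) →
        dist (g w) (g w') ≤ (1 - 1 / (4 : ℝ) ^ Fintype.card ι) ^ k * r) ∧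
      ∀ (w : ι → ℕ) (p : X) (ρ : ℝ),
        (∀ v : ι → ℕ, (∀ i, v i * 2 ^ k < w i + 2 ^ k ∧ w i < v i * 2 ^ k + 2 ^ k) →
          dist p (f v) ≤ ρ) →
        dist p (g w) ≤ ρ := by
  induction k with
  | zero =>
    refine ⟨f, by simpa using hf, fun w p ρ h => h w fun i => by simp⟩
  | succ k ih =>
    obtain ⟨g, h1, h2⟩ := ih
    obtain ⟨g', h3, h4⟩ := exists_refine_once hgeo hpt g h1
    refine ⟨g', fun w w' h => (h3 w w' h).trans_eq (by ring), fun w p ρ h => ?_⟩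
    refine h4 w p ρ fun v hv => h2 v p ρ fun u hu => h u fun i => ?_
    have a1 := hv i
    have a2 := hu i
    rw [pow_succ, ← mul_assoc]
    generalize u i * 2 ^ k = A at *
    generalize 2 ^ k = K at *
    omega

end Metric

/-! ### Passing beyond a point -/

section Beyond
variable {X : Type*} [MetricSpace X]

/-- In one coordinate, a coarse grid point less than one mesh away from a fine grid point stays
within one mesh of it after both are clamped to `[0, 1]`. -/
theorem abs_clamp_sub_clamp_le {N K v w : ℕ} (hN : 0 < N) (hK : 0 < K)
    (h1 : v * K < w + K) (h2 : w < v * K + K) :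
    |((min v N : ℕ) : ℝ) / N - ((min w (K * N) : ℕ) : ℝ) / ((K * N : ℕ) : ℝ)| ≤ 1 / N := by
  have hN' : (0 : ℝ) < N := by exact_mod_cast hN
  have hK' : (0 : ℝ) < K := by exact_mod_cast hK
  have e1 : min v N * K ≤ min w (K * N) + K := by
    rcases le_total w (K * N) with h | h
    · rw [min_eq_left h]
      exact (Nat.mul_le_mul_right _ (min_le_left _ _)).trans h1.le
    · rw [min_eq_right h]
      have := Nat.mul_le_mul_right K (min_le_right v N)
      rw [mul_comm N K] at this
      omega
  have e2 : min w (K * N) ≤ min v N * K + K := by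
    rcases le_total v N with h | h
    · rw [min_eq_left h]
      exact (min_le_left _ _).trans h2.le
    · rw [min_eq_right h, mul_comm N K]
      exact (min_le_right _ _).trans (Nat.le_add_right _ _)
  have e1' : ((min v N : ℕ) : ℝ) * K ≤ ((min w (K * N) : ℕ) : ℝ) + K := by exact_mod_cast e1
  have e2' : ((min w (K * N) : ℕ) : ℝ) ≤ ((min v N : ℕ) : ℝ) * K + K := by exact_mod_cast e2
  generalize ((min v N : ℕ) : ℝ) = A at *
  generalize ((min w (K * N) : ℕ) : ℝ) = B at *
  push_cast
  have : A / N - B / (K * N) = (A * K - B) / (K * N) := by field_simp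
  rw [this, abs_div, abs_of_pos (show (0 : ℝ) < K * N by positivity), div_le_div_iff₀
    (by positivity) hN']
  have : |A * K - B| ≤ K := abs_le.2 ⟨by linarith, by linarith⟩
  nlinarith

/-- The geodesic from `p` to `q` can be prolonged a little beyond `q`. Otherwise, moving each point
`x` of a small cube around `q` towards `p` by a fraction `ε` would miss `q`, although a map of a cube
that is close to the identity must hit its centre. The motion towards `p` need not be continuous,
so it is replaced by a map of a fine grid with tiny jumps (`exists_refine`), to which the
combinatorial `kuhn_lemma` applies; this gives the claim up to an error `η`, and compactness of the
cube removes the error. -/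
theorem exists_beyond [ProperSpace X] (hgeo : IsGeodesicSpace X) (hpt : IsPtolemy X) {d : ℕ}
    {p q : X} (hpq : p ≠ q) (e : OpenPartialHomeomorph X (Fin d → ℝ)) (hq : q ∈ e.source) :
    ∃ x, x ≠ q ∧ dist p x = dist p q + dist q x := by
  obtain ⟨R, hR, hRt⟩ : ∃ R > 0, Metric.closedBall (e q) R ⊆ e.target :=
    Metric.nhds_basis_closedBall.mem_iff.1 (e.open_target.mem_nhds (e.map_source hq))
  have hsymm : ContinuousOn e.symm (Metric.closedBall (e q) R) := e.continuousOn_symm.mono hRt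
  have hcube : IsCompact (Metric.closedBall (e q) R) := isCompact_closedBall _ _
  set Q : Set X := e.symm '' Metric.closedBall (e q) R with hQ
  have hQc : IsCompact Q := hcube.image_of_continuousOn hsymm
  have hQs : Q ⊆ e.source := by
    rintro _ ⟨y, hy, rfl⟩
    exact e.map_target (hRt hy)
  have hqQ : q ∈ Q := ⟨e q, Metric.mem_closedBall_self hR.le, e.left_inv hq⟩
  obtain ⟨δ₁, hδ₁, hδ₁s⟩ := hQc.exists_cthickening_subset_open e.open_source hQs
  have hQ'c : IsCompact (Metric.cthickening δ₁ Q) := hQc.cthickening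
  have heunif := hQ'c.uniformContinuousOn_of_continuous (e.continuousOn.mono hδ₁s)
  rw [Metric.uniformContinuousOn_iff] at heunif
  have hsunif := hcube.uniformContinuousOn_of_continuous hsymm
  rw [Metric.uniformContinuousOn_iff] at hsunif
  obtain ⟨δ₂, hδ₂, hδ₂e⟩ := heunif R hR
  obtain ⟨B, hB, hBQ⟩ : ∃ B > 0, ∀ x ∈ Q, dist p x ≤ B := by
    obtain ⟨B, hB⟩ := hQc.isBounded.subset_closedBall p
    refine ⟨max B 1, by positivity, fun x hx => ?_⟩
    have := hB hx
    rw [Metric.mem_closedBall, dist_comm] at this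
    exact this.trans (le_max_left _ _)
  obtain ⟨δ, hδ, hδ1, hδ2⟩ : ∃ δ > 0, δ ≤ δ₁ ∧ δ ≤ δ₂ :=
    ⟨min δ₁ δ₂, lt_min hδ₁ hδ₂, min_le_left _ _, min_le_right _ _⟩
  obtain ⟨ε, hε0, hε1, hεB⟩ : ∃ ε : ℝ, 0 < ε ∧ ε < 1 ∧ ε * B < δ / 2 := by
    refine ⟨δ / (2 * (B + δ)), by positivity, ?_, ?_⟩
    · rw [div_lt_one (by positivity)]; linarith
    · rw [div_mul_eq_mul_div, div_lt_div_iff₀ (by positivity) (by positivity)]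
      nlinarith [mul_pos hδ hδ]
  -- Here `z` is a point of the modified grid map that is almost `q`, and `x` the grid point mapped
  -- to it, so that `z` is almost the point of a geodesic from `x` to `p` at the fraction `ε`.
  have approx : ∀ η > 0, η < δ / 4 → ∃ x ∈ Q, ∃ z, dist z q < η ∧
      dist p z ≤ (1 - ε) * dist p x + η ∧ dist x z ≤ ε * dist p x + 2 * η := by
    intro η hη hηδ
    obtain ⟨η₁, hη₁, hη₁s⟩ :=
      Metric.continuousAt_iff.1 (e.continuousAt_symm (e.map_source hq)) η hη
    rw [e.left_inv hq] at hη₁s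
    obtain ⟨δ₃, hδ₃, hδ₃e⟩ := heunif η₁ hη₁
    obtain ⟨δ₄, hδ₄, hδ₄s⟩ := hsunif η hη
    obtain ⟨N, hN, hNδ⟩ : ∃ N : ℕ, 0 < N ∧ 2 * R / N < δ₄ := by
      obtain ⟨N, hN⟩ := exists_nat_gt (2 * R / δ₄)
      have hNpos : (0 : ℝ) < N := lt_trans (by positivity) hN
      refine ⟨N, by exact_mod_cast hNpos, ?_⟩
      rw [div_lt_iff₀ hδ₄] at hN
      rw [div_lt_iff₀ hNpos]; linarith
    -- The vertex `w` of the grid with `M` cells per side, in the chart; coordinates are clamped so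
    -- that it is defined for all `w`.
    let pt : ℕ → (Fin d → ℕ) → Fin d → ℝ := fun M w i =>
      e q i + R * (2 * (((min (w i) M : ℕ) : ℝ) / (M : ℝ)) - 1)
    have hpt_mem : ∀ M w, pt M w ∈ Metric.closedBall (e q) R := by
      intro M w
      rw [Metric.mem_closedBall, dist_pi_le_iff hR.le]
      intro i
      have h0 : (0 : ℝ) ≤ ((min (w i) M : ℕ) : ℝ) / (M : ℝ) := by positivity
      have h1 : ((min (w i) M : ℕ) : ℝ) / (M : ℝ) ≤ 1 :=
        div_le_one_of_le₀ (by exact_mod_cast min_le_right _ _) (by positivity)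
      rw [Real.dist_eq, abs_le]
      simp only [pt]
      constructor <;> nlinarith
    let x : ℕ → (Fin d → ℕ) → X := fun M w => e.symm (pt M w)
    have hxQ : ∀ M w, x M w ∈ Q := fun M w => ⟨_, hpt_mem M w, rfl⟩
    choose f hf1 hf2 using fun v : Fin d → ℕ =>
      hgeo.exists_between p (x N v) (t := 1 - ε) (by linarith) (by linarith)
    have hjump : ∀ v v' : Fin d → ℕ, dist (f v) (f v') ≤ 2 * B := by
      have hfB : ∀ v, dist p (f v) ≤ B := fun v => by
        rw [hf1]
        have := hBQ _ (hxQ N v)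
        nlinarith [dist_nonneg (x := p) (y := x N v)]
      intro v v'
      have := dist_triangle_left (f v) (f v') p
      linarith [hfB v, hfB v']
    obtain ⟨k, hk⟩ : ∃ k : ℕ,
        (1 - 1 / (4 : ℝ) ^ Fintype.card (Fin d)) ^ k * (2 * B) < δ₃ := by
      have h4 : (1 : ℝ) ≤ (4 : ℝ) ^ Fintype.card (Fin d) := one_le_pow₀ (by norm_num)
      have h5 : 1 / (4 : ℝ) ^ Fintype.card (Fin d) ≤ 1 := by
        rw [div_le_one (by positivity)]; exact h4
      have h6 : 0 < 1 / (4 : ℝ) ^ Fintype.card (Fin d) := by positivity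
      obtain ⟨k, hk⟩ := exists_pow_lt_of_lt_one (show 0 < δ₃ / (2 * B) by positivity)
        (show 1 - 1 / (4 : ℝ) ^ Fintype.card (Fin d) < 1 by linarith)
      exact ⟨k, by rwa [lt_div_iff₀ (by positivity)] at hk⟩
    obtain ⟨g, hg1, hg2⟩ := exists_refine hgeo hpt f (fun v v' _ => hjump v v') k
    have hKpos : 0 < 2 ^ k := by positivity
    generalize 2 ^ k = K at hg2 hKpos
    set M := K * N with hM
    have hMpos : 0 < M := Nat.mul_pos hKpos hN
    have hMpos' : (0 : ℝ) < M := by exact_mod_cast hMpos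
    have hclose : ∀ w v : Fin d → ℕ, (∀ i, v i * K < w i + K ∧ w i < v i * K + K) →
        dist (x N v) (x M w) < η := by
      intro w v h
      refine hδ₄s _ (hpt_mem N v) _ (hpt_mem M w) (lt_of_le_of_lt ?_ hNδ)
      rw [dist_pi_le_iff (by positivity)]
      intro i
      have := abs_clamp_sub_clamp_le hN hKpos (h i).1 (h i).2
      rw [Real.dist_eq]
      simp only [pt]
      rw [show ∀ a b c : ℝ, a + R * (2 * b - 1) - (a + R * (2 * c - 1)) = 2 * R * (b - c) by
        intros; ring, abs_mul, abs_of_pos (by positivity), div_eq_mul_one_div (2 * R)]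
      exact mul_le_mul_of_nonneg_left this (by positivity)
    have hgp : ∀ w, dist p (g w) ≤ (1 - ε) * dist p (x M w) + η := by
      intro w
      refine hg2 w p _ fun v hv => ?_
      rw [hf1]
      have h1 := hclose w v hv
      have h2 := dist_triangle_right p (x N v) (x M w)
      nlinarith
    have hgx : ∀ w, dist (x M w) (g w) ≤ ε * dist p (x M w) + 2 * η := by
      intro w
      refine hg2 w (x M w) _ fun v hv => ?_
      have h1 := hclose w v hv
      have h2 := dist_triangle_right p (x N v) (x M w)
      have h3 := dist_triangle_left (x M w) (f v) (x N v)
      have h4 := hf2 v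
      rw [dist_comm] at h4
      nlinarith
    have hgδ : ∀ w, dist (x M w) (g w) < δ := by
      intro w
      have := hBQ _ (hxQ M w)
      nlinarith [hgx w]
    have hQsub : ∀ w, x M w ∈ Metric.cthickening δ₁ Q := fun w =>
      Metric.self_subset_cthickening _ (hxQ M w)
    have hgQ : ∀ w, g w ∈ Metric.cthickening δ₁ Q := fun w =>
      Metric.mem_cthickening_of_dist_le _ (x M w) _ _ (hxQ M w)
        (by rw [dist_comm]; exact (hgδ w).le.trans hδ1)
    have heg : ∀ w i, |e (g w) i - pt M w i| < R := by
      intro w i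
      have h1 := hδ₂e _ (hgQ w) _ (hQsub w) (by rw [dist_comm]; exact (hgδ w).trans_le hδ2)
      have h2 : e (x M w) = pt M w := e.right_inv (hRt (hpt_mem M w))
      rw [h2] at h1
      exact (Real.dist_eq _ _ ▸ dist_le_pi_dist (e (g w)) (pt M w) i).trans_lt h1
    classical
    obtain ⟨w, hw⟩ := kuhn_lemma M (fun i w => if e q i < e (g w) i then (1 : ZMod 2) else 0)
      (by
        intro i w hwi
        have := abs_lt.1 (heg w i)
        simp only [pt, hwi, zero_le, inf_of_le_left, Nat.cast_zero, zero_div] at this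
        rw [if_neg (by linarith [this.2])])
      (by
        intro i w hwi
        have := abs_lt.1 (heg w i)
        simp only [pt, hwi, min_self, div_self hMpos'.ne'] at this
        rw [if_pos (by linarith [this.1])])
    refine ⟨x M w, hxQ M w, g w, ?_, hgp w, hgx w⟩
    have hnear : ∀ z : Fin d → ℕ, (∀ k, w k ≤ z k ∧ z k ≤ w k + 1) → ∀ i,
        |e (g z) i - e (g w) i| < η₁ := by
      intro z hz i
      have h1 := hg1 z w fun k => by have := hz k; omega
      have h2 := hδ₃e _ (hgQ z) _ (hgQ w) (h1.trans_lt hk)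
      exact (Real.dist_eq _ _ ▸ dist_le_pi_dist (e (g z)) (e (g w)) i).trans_lt h2
    have hsmall : dist (e (g w)) (e q) < η₁ := by
      rw [dist_pi_lt_iff hη₁]
      intro i
      obtain ⟨z, z', hzz, hz, hz'⟩ := hw i
      have a1 := abs_lt.1 (hnear z hz i)
      have a2 := abs_lt.1 (hnear z' hz' i)
      rw [Real.dist_eq, abs_lt]
      by_cases c1 : e q i < e (g z) i <;> by_cases c2 : e q i < e (g z') i <;>
        simp [c1, c2] at hzz <;> push Not at * <;> constructor <;> linarith
    have := hη₁s hsmall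
    rwa [e.left_inv (hδ₁s (hgQ w))] at this
  -- `F x ≤ 0` means that `q` divides a geodesic from `x` to `p` in the ratio `ε : 1 - ε`. By `approx`
  -- the infimum of `F` over `Q` is at most `0`, and it is attained.
  let F : X → ℝ := fun x => max (dist p q - (1 - ε) * dist p x) (dist x q - ε * dist p x)
  have hF : Continuous F := by fun_prop
  obtain ⟨x, hxQ, hxmin⟩ := hQc.exists_isMinOn ⟨q, hqQ⟩ hF.continuousOn
  have hFx : F x ≤ 0 := by
    refine le_of_forall_pos_le_add fun η hη => ?_
    set η' := min (η / 3) (δ / 8) with hη'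
    have hη'0 : 0 < η' := lt_min (by positivity) (by positivity)
    have hη'1 : η' ≤ η / 3 := min_le_left _ _
    have hη'2 : η' ≤ δ / 8 := min_le_right _ _
    obtain ⟨y, hy, z, h1, h2, h3⟩ := approx η' hη'0 (by linarith)
    refine (hxmin hy).trans (max_le ?_ ?_)
    · linarith [dist_triangle p z q]
    · linarith [dist_triangle y z q]
  have h1 : dist p q ≤ (1 - ε) * dist p x := by
    linarith [le_max_left (dist p q - (1 - ε) * dist p x) (dist x q - ε * dist p x)]
  have h2 : dist x q ≤ ε * dist p x := by
    linarith [le_max_right (dist p q - (1 - ε) * dist p x) (dist x q - ε * dist p x)]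
  refine ⟨x, ?_, ?_⟩
  · rintro rfl
    nlinarith [dist_pos.2 hpq]
  · rw [dist_comm q x]
    linarith [dist_triangle_right p x q]

end Beyond

/-! ### Hopf–Rinow and extension of geodesics -/

section Extension
variable {X : Type*} [MetricSpace X]

theorem exists_dist_le_dist_le (hgeo : IsGeodesicSpace X) {p x : X} {r δ : ℝ} (hr : 0 ≤ r)
    (hδ : 0 ≤ δ) (h : dist p x ≤ r + δ) : ∃ y, dist p y ≤ r ∧ dist y x ≤ δ := by
  rcases le_or_gt (dist p x) r with hx | hx
  · exact ⟨x, hx, by simpa using hδ⟩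
  · have hpos : 0 < dist p x := hr.trans_lt hx
    obtain ⟨y, h1, h2⟩ := hgeo.exists_between p x (t := r / dist p x) (by positivity)
      (by rw [div_le_one hpos]; exact hx.le)
    refine ⟨y, ?_, ?_⟩
    · rw [h1, div_mul_cancel₀ _ hpos.ne']
    · rw [h2, sub_mul, div_mul_cancel₀ _ hpos.ne']; linarith

/-- The Hopf–Rinow theorem: a complete, locally compact geodesic space is proper. The radii of
compact balls about `p` form an interval which is closed, by completeness, and open, by local
compactness. -/
theorem properSpace_of_geodesic [CompleteSpace X] [LocallyCompactSpace X]
    (hgeo : IsGeodesicSpace X) : ProperSpace X := by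
  refine ⟨fun p r₀ => ?_⟩
  by_contra hr₀
  set S : Set ℝ := {r | IsCompact (Metric.closedBall p r)} with hS
  have hdown : ∀ r ∈ S, ∀ s ≤ r, s ∈ S := fun r hr s hs =>
    IsCompact.of_isClosed_subset hr Metric.isClosed_closedBall (Metric.closedBall_subset_closedBall hs)
  have hbdd : BddAbove S := ⟨r₀, fun s hs => le_of_not_gt fun h => hr₀ (hdown s hs _ h.le)⟩
  have h0 : (0 : ℝ) ∈ S := by simp [hS]
  set R := sSup S with hR
  have hR0 : 0 ≤ R := le_csSup hbdd h0
  have hlt : ∀ r < R, r ∈ S := fun r hr => by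
    obtain ⟨s, hs, hrs⟩ := exists_lt_of_lt_csSup ⟨0, h0⟩ hr
    exact hdown s hs r hrs.le
  have hRS : R ∈ S := by
    refine isCompact_iff_totallyBounded_isComplete.2 ⟨?_, Metric.isClosed_closedBall.isComplete⟩
    rw [Metric.totallyBounded_iff]
    intro ε hε
    have hr' : max 0 (R - ε / 2) ∈ S := by
      rcases max_cases 0 (R - ε / 2) with h | h
      · rw [h.1]; exact h0
      · rw [h.1]; exact hlt _ (by linarith)
    obtain ⟨t, ht, hcov⟩ := Metric.totallyBounded_iff.1 hr'.totallyBounded (ε / 2) (by positivity)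
    refine ⟨t, ht, fun x hx => ?_⟩
    rw [Metric.mem_closedBall, dist_comm] at hx
    obtain ⟨y, hy1, hy2⟩ := exists_dist_le_dist_le hgeo (le_max_left 0 (R - ε / 2))
      (show 0 ≤ ε / 2 by positivity) (show dist p x ≤ _ by
        linarith [le_max_right 0 (R - ε / 2)])
    have hy := hcov (show y ∈ Metric.closedBall p _ by rwa [Metric.mem_closedBall, dist_comm])
    simp only [Set.mem_iUnion, Metric.mem_ball, exists_prop] at hy ⊢
    obtain ⟨z, hz, hyz⟩ := hy
    exact ⟨z, hz, by linarith [dist_triangle_left x z y]⟩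
  obtain ⟨δ, hδ, hc⟩ := IsCompact.exists_isCompact_cthickening hRS
  have : R + δ ∈ S := by
    refine hc.of_isClosed_subset Metric.isClosed_closedBall fun x hx => ?_
    rw [Metric.mem_closedBall, dist_comm] at hx
    obtain ⟨y, hy1, hy2⟩ := exists_dist_le_dist_le hgeo hR0 hδ.le hx
    exact Metric.mem_cthickening_of_dist_le x y _ _
      (by rwa [Metric.mem_closedBall, dist_comm]) (by rwa [dist_comm])
  linarith [le_csSup hbdd this]

/-- If every geodesic can be prolonged a little, it can be prolonged by any length `l`: among the
prolongations of length at most `l`, one of maximal length has length `l`. -/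
theorem exists_beyond_length [ProperSpace X] (hgeo : IsGeodesicSpace X)
    (hbeyond : ∀ p q : X, p ≠ q → ∃ x, x ≠ q ∧ dist p x = dist p q + dist q x)
    {p q : X} (hpq : p ≠ q) {l : ℝ} (hl : 0 ≤ l) :
    ∃ x, dist q x = l ∧ dist p x = dist p q + l := by
  have hS : IsCompact {x | dist p x = dist p q + dist q x ∧ dist q x ≤ l} := by
    refine (isCompact_closedBall q l).of_isClosed_subset ?_ fun x hx => ?_
    · have : IsClosed ({x | dist p x = dist p q + dist q x} ∩ {x | dist q x ≤ l}) :=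
        (isClosed_eq (by fun_prop) (by fun_prop)).inter (isClosed_le (by fun_prop) (by fun_prop))
      exact this
    · rw [Metric.mem_closedBall, dist_comm]; exact hx.2
  obtain ⟨x, ⟨hx1, hx2⟩, hxmax⟩ := hS.exists_isMaxOn ⟨q, by simp [hl]⟩
    (f := fun x => dist q x) (by fun_prop)
  rcases hx2.eq_or_lt with h | h
  · exact ⟨x, h, by rw [hx1, h]⟩
  exfalso
  have hpx : p ≠ x := by
    rintro rfl
    have := dist_pos.2 hpq
    rw [dist_self] at hx1
    linarith [dist_nonneg (x := q) (y := p)]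
  obtain ⟨x', hne, hx'⟩ := hbeyond p x hpx
  have hD : 0 < dist x x' := dist_pos.2 hne.symm
  have ht0 : 0 < min 1 ((l - dist q x) / dist x x') :=
    lt_min one_pos (div_pos (by linarith) hD)
  obtain ⟨y, hy1, hy2⟩ := hgeo.exists_between x x' ht0.le (min_le_left _ _)
  have htl : min 1 ((l - dist q x) / dist x x') * dist x x' ≤ l - dist q x := by
    rw [← le_div_iff₀ hD]; exact min_le_right _ _
  have ht1 := mul_pos ht0 hD
  rw [← hy1] at htl ht1
  rw [sub_mul, one_mul, ← hy1] at hy2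
  have h1 : dist p x + dist x y ≤ dist p y := by linarith [dist_triangle p y x']
  have h2 := dist_triangle q x y
  have h3 := dist_triangle p q y
  have hy : y ∈ {x | dist p x = dist p q + dist q x ∧ dist q x ≤ l} :=
    ⟨by linarith, by linarith⟩
  have := hxmax hy
  simp only [Set.mem_ofPred_eq] at this
  linarith

/-- A nonconstant geodesic on `[a, b]` extends to `[a, b + L]` by any geodesic from `c b` to a point
`x` with `c b` between `c a` and `x`; the concatenation is a geodesic because the distances from
`c a` to `c b` and from `c b` to `x` add up. -/
theorem extend_right [ProperSpace X] (hgeo : IsGeodesicSpace X)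
    (hbeyond : ∀ p q : X, p ≠ q → ∃ x, x ≠ q ∧ dist p x = dist p q + dist q x)
    {c : ℝ → X} {a b l L : ℝ} (hab : a < b) (hl : 0 < l) (hL : 0 < L)
    (hc : ∀ s ∈ Set.Icc a b, ∀ t ∈ Set.Icc a b, dist (c s) (c t) = l * |s - t|) :
    ∃ c' : ℝ → X, (∀ t ∈ Set.Icc a b, c' t = c t) ∧
      ∀ s ∈ Set.Icc a (b + L), ∀ t ∈ Set.Icc a (b + L), dist (c' s) (c' t) = l * |s - t| := by
  have hcab : dist (c a) (c b) = l * (b - a) := by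
    rw [hc a ⟨le_rfl, hab.le⟩ b ⟨hab.le, le_rfl⟩, abs_sub_comm, abs_of_pos (by linarith)]
  have hne : c a ≠ c b := by
    rw [← dist_pos, hcab]; exact mul_pos hl (by linarith)
  obtain ⟨x, hx1, hx2⟩ := exists_beyond_length hgeo hbeyond hne (mul_pos hl hL).le
  obtain ⟨γ, hγ0, hγ1, hγ⟩ := hgeo.exists_unit (c b) x
  rw [hx1] at hγ
  have hunit : ∀ t, b < t → t ≤ b + L → (t - b) / L ∈ Set.Icc (0 : ℝ) 1 := fun t h1 h2 =>
    ⟨div_nonneg (by linarith) hL.le, by rw [div_le_one hL]; linarith⟩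
  have key : ∀ s ∈ Set.Icc a (b + L), ∀ t ∈ Set.Icc a (b + L), s ≤ t →
      dist (if s ≤ b then c s else γ ((s - b) / L)) (if t ≤ b then c t else γ ((t - b) / L))
        = l * |s - t| := by
    rintro s ⟨hs1, hs2⟩ t ⟨ht1, ht2⟩ hst
    rcases le_or_gt t b with ht | ht
    · rw [if_pos (hst.trans ht), if_pos ht]
      exact hc s ⟨hs1, hst.trans ht⟩ t ⟨ht1, ht⟩
    rw [if_neg ht.not_ge]
    rcases le_or_gt s b with hs | hs
    · rw [if_pos hs]
      have d1 : dist (c a) (c s) = l * (s - a) := by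
        rw [hc a ⟨le_rfl, hab.le⟩ s ⟨hs1, hs⟩, abs_sub_comm, abs_of_nonneg (by linarith)]
      have d2 : dist (c s) (c b) = l * (b - s) := by
        rw [hc s ⟨hs1, hs⟩ b ⟨hab.le, le_rfl⟩, abs_sub_comm, abs_of_nonneg (by linarith)]
      have d3 : dist (c b) (γ ((t - b) / L)) = l * (t - b) := by
        have := hγ 0 (by simp) _ (hunit t ht ht2)
        rw [hγ0] at this
        rw [this, zero_sub, abs_neg, abs_of_nonneg (hunit t ht ht2).1]
        field_simp
      have d4 : dist (γ ((t - b) / L)) x = l * (b + L - t) := by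
        have := hγ _ (hunit t ht ht2) 1 (by simp)
        rw [hγ1] at this
        rw [this, abs_sub_comm, abs_of_nonneg (by linarith [(hunit t ht ht2).2])]
        field_simp
        ring
      rw [abs_sub_comm, abs_of_nonneg (by linarith)]
      apply le_antisymm
      · linarith [dist_triangle (c s) (c b) (γ ((t - b) / L))]
      · linarith [dist_triangle4 (c a) (c s) (γ ((t - b) / L)) x]
    · rw [if_neg hs.not_ge, hγ _ (hunit s hs hs2) _ (hunit t ht ht2), ← sub_div, abs_div,
        abs_of_pos hL]
      field_simp
      congr 1
      ring
  refine ⟨fun t => if t ≤ b then c t else γ ((t - b) / L), fun t ht => if_pos ht.2,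
    fun s hs t ht => ?_⟩
  rcases le_total s t with h | h
  · exact key s hs t ht h
  · rw [dist_comm, abs_sub_comm]; exact key t ht s hs h

theorem extend_both [ProperSpace X] (hgeo : IsGeodesicSpace X)
    (hbeyond : ∀ p q : X, p ≠ q → ∃ x, x ≠ q ∧ dist p x = dist p q + dist q x)
    {c : ℝ → X} {a b l L : ℝ} (hab : a < b) (hl : 0 < l) (hL : 0 < L)
    (hc : ∀ s ∈ Set.Icc a b, ∀ t ∈ Set.Icc a b, dist (c s) (c t) = l * |s - t|) :
    ∃ c' : ℝ → X, (∀ t ∈ Set.Icc a b, c' t = c t) ∧ ∀ s ∈ Set.Icc (a - L) (b + L),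
      ∀ t ∈ Set.Icc (a - L) (b + L), dist (c' s) (c' t) = l * |s - t| := by
  obtain ⟨c₁, h1, h2⟩ := extend_right hgeo hbeyond hab hl hL hc
  obtain ⟨c₂, h3, h4⟩ := extend_right hgeo hbeyond (c := fun t => c₁ (-t)) (a := -(b + L))
    (b := -a) (by linarith) hl hL (by
      rintro s ⟨hs1, hs2⟩ t ⟨ht1, ht2⟩
      rw [h2 (-s) ⟨by linarith, by linarith⟩ (-t) ⟨by linarith, by linarith⟩, abs_sub_comm]
      congr 2; ring)
  refine ⟨fun t => c₂ (-t), ?_, ?_⟩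
  · rintro t ⟨ht1, ht2⟩
    simp only
    rw [h3 (-t) ⟨by linarith, by linarith⟩, neg_neg, h1 t ⟨ht1, ht2⟩]
  · rintro s ⟨hs1, hs2⟩ t ⟨ht1, ht2⟩
    simp only
    rw [h4 (-s) ⟨by linarith, by linarith⟩ (-t) ⟨by linarith, by linarith⟩, abs_sub_comm]
    congr 2; ring

/-- A nonconstant geodesic on an arbitrary interval `I` extends to `ℝ`. For a finite set `F ⊆ I` and
`m : ℕ` there is a map that agrees with `c` on `F` and is a geodesic on `[-m, m]`; a pointwise limit
of these along an ultrafilter exists since closed balls are compact. -/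
theorem exists_complete_extension [ProperSpace X] (hgeo : IsGeodesicSpace X)
    (hbeyond : ∀ p q : X, p ≠ q → ∃ x, x ≠ q ∧ dist p x = dist p q + dist q x)
    {c : ℝ → X} {I : Set ℝ} (hI : Convex ℝ I) {l : ℝ} (hl : 0 < l)
    (hc : ∀ s ∈ I, ∀ t ∈ I, dist (c s) (c t) = l * |s - t|) {a b : ℝ} (ha : a ∈ I) (hb : b ∈ I)
    (hab : a < b) :
    ∃ cbar : ℝ → X, (∀ s t, dist (cbar s) (cbar t) = l * |s - t|) ∧ ∀ t ∈ I, cbar t = c t := by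
  classical
  have hfin : ∀ i : Finset I × ℕ, ∃ c' : ℝ → X, (∀ t ∈ i.1, c' (t : ℝ) = c t) ∧ c' a = c a ∧
      ∀ s t : ℝ, |s| ≤ (i.2 : ℝ) → |t| ≤ (i.2 : ℝ) →
        dist (c' s) (c' t) = l * |s - t| := by
    rintro ⟨F, m⟩
    -- Adjoining `a` and `b` makes the hull `[A, B]` nondegenerate and fixes the value at `a`, which
    -- bounds the family pointwise.
    let F' : Finset I := insert ⟨a, ha⟩ (insert ⟨b, hb⟩ F)
    have haF : (⟨a, ha⟩ : I) ∈ F' := by simp [F']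
    have hbF : (⟨b, hb⟩ : I) ∈ F' := by simp [F']
    have hne : F'.Nonempty := ⟨_, haF⟩
    set A := F'.min' hne with hA
    set B := F'.max' hne with hB
    have hAa : (A : ℝ) ≤ a := F'.min'_le _ haF
    have hbB : b ≤ (B : ℝ) := F'.le_max' _ hbF
    have hsub : Set.Icc (A : ℝ) B ⊆ I := hI.ordConnected.out A.2 B.2
    obtain ⟨c', h1, h2⟩ := extend_both hgeo hbeyond (a := A) (b := B)
      (L := m + |(A : ℝ)| + |(B : ℝ)| + 1) (by linarith) hl (by positivity)
      (fun s hs t ht => hc s (hsub hs) t (hsub ht))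
    refine ⟨c', fun t ht => ?_, h1 a ⟨hAa, by linarith⟩, fun s t hs ht => ?_⟩
    · have htF : t ∈ F' := by simp [F', ht]
      exact h1 t ⟨F'.min'_le _ htF, F'.le_max' _ htF⟩
    · have hA' := abs_le.1 (le_refl |(A : ℝ)|)
      have hB' := abs_le.1 (le_refl |(B : ℝ)|)
      have hA0 := abs_nonneg (A : ℝ)
      have hB0 := abs_nonneg (B : ℝ)
      rw [abs_le] at hs ht
      simp only at hs ht
      exact h2 s ⟨by linarith, by linarith⟩ t ⟨by linarith, by linarith⟩
  choose c' h1 h2 h3 using hfin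
  let U : Ultrafilter (Finset I × ℕ) := Ultrafilter.of Filter.atTop
  have hU : (U : Filter (Finset I × ℕ)) ≤ Filter.atTop := Ultrafilter.of_le _
  have hev : ∀ s t : ℝ, ∀ᶠ i in (U : Filter (Finset I × ℕ)),
      dist (c' i s) (c' i t) = l * |s - t| := by
    intro s t
    obtain ⟨m, hm⟩ := exists_nat_ge (max |s| |t|)
    refine hU ((Filter.eventually_ge_atTop (∅, m)).mono fun i hi => ?_)
    have : (m : ℝ) ≤ i.2 := by exact_mod_cast hi.2
    exact h3 i s t ((le_max_left _ _).trans (hm.trans this))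
      ((le_max_right _ _).trans (hm.trans this))
  have hlim : ∀ t : ℝ, ∃ x, Filter.Tendsto (fun i => c' i t) U (nhds x) := by
    intro t
    obtain ⟨x, -, hx⟩ := (isCompact_closedBall (c a) (l * |t - a|)).ultrafilter_le_nhds
      (U.map fun i => c' i t) (by
        rw [Filter.le_principal_iff, Ultrafilter.coe_map, Filter.mem_map]
        filter_upwards [hev t a] with i hi
        simp only [Set.mem_preimage, Metric.mem_closedBall]
        rw [← h2 i, hi])
    exact ⟨x, hx⟩
  choose cbar hcbar using hlim
  refine ⟨cbar, fun s t => ?_, fun t ht => ?_⟩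
  · refine tendsto_nhds_unique ((hcbar s).dist (hcbar t)) ?_
    exact tendsto_const_nhds.congr' ((hev s t).mono fun i hi => hi.symm)
  · refine tendsto_nhds_unique (hcbar t) ?_
    refine tendsto_const_nhds.congr' ?_
    refine hU ((Filter.eventually_ge_atTop ({⟨t, ht⟩}, 0)).mono fun i hi => ?_)
    exact (h1 i ⟨t, ht⟩ (hi.1 (by simp))).symm

end Extension

/-- **Corollary 2.7.** In a complete geodesic Ptolemy metric space which is a topological
manifold (modelled on `ℝ^d`), every geodesic segment extends to a complete geodesic
`c̄ : ℝ → X`. -/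
theorem geodesics_extendable_of_ptolemy_manifold
    {X : Type*} [MetricSpace X] [CompleteSpace X]
    (d : ℕ) [ChartedSpace (EuclideanSpace ℝ (Fin d)) X]
    (hgeo : IsGeodesicSpace X) (hpt : IsPtolemy X)
    (c : ℝ → X) (I : Set ℝ) (hI : Convex ℝ I) (hc : IsGeodesicOn c I) :
    ∃ cbar : ℝ → X, IsGeodesicOn cbar Set.univ ∧ ∀ t ∈ I, cbar t = c t := by
  by_cases hconst : ∃ a ∈ I, ∃ b ∈ I, c a ≠ c b
  · obtain ⟨l, hl, hcl⟩ := hc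
    have : LocallyCompactSpace X :=
      ChartedSpace.locallyCompactSpace (EuclideanSpace ℝ (Fin d)) X
    have : ProperSpace X := properSpace_of_geodesic hgeo
    have hbeyond : ∀ p q : X, p ≠ q → ∃ x, x ≠ q ∧ dist p x = dist p q + dist q x :=
      fun p q hpq => exists_beyond hgeo hpt hpq
        ((chartAt (EuclideanSpace ℝ (Fin d)) q).trans
          (PiLp.homeomorph 2 fun _ : Fin d => ℝ).toOpenPartialHomeomorph)
        (by simp)
    obtain ⟨a, b, ha, hb, hab, hne⟩ : ∃ a b, a ∈ I ∧ b ∈ I ∧ a < b ∧ c a ≠ c b := by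
      obtain ⟨a, ha, b, hb, hne⟩ := hconst
      rcases lt_trichotomy a b with h | h | h
      · exact ⟨a, b, ha, hb, h, hne⟩
      · exact absurd (congrArg c h) hne
      · exact ⟨b, a, hb, ha, h, hne.symm⟩
    have hl' : 0 < l := by
      refine hl.lt_of_ne ?_
      rintro rfl
      exact hne (dist_eq_zero.1 (by simpa using hcl a ha b hb))
    obtain ⟨cbar, h1, h2⟩ := exists_complete_extension hgeo hbeyond hI hl' hcl ha hb hab
    exact ⟨cbar, ⟨l, hl, fun s _ t _ => h1 s t⟩, h2⟩
  · push Not at hconst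
    rcases I.eq_empty_or_nonempty with rfl | ⟨a, ha⟩
    · exact ⟨fun _ => c 0, ⟨0, le_rfl, by simp⟩, by simp⟩
    · exact ⟨fun _ => c a, ⟨0, le_rfl, by simp⟩, fun t ht => hconst a ha t ht⟩
end
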